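/- Let (t_k) be a sequence of positive reals with t_k → 0, and for each k let (x^k,y^k) be a nondegenerate Karush–Kuhn–Tucker point of the Scholtes-type regularization S(t_k), all with the same quadratic index m. Suppose (x^k,y^k) → (x̄,ȳ), where (x̄,ȳ) is a nondegenerate T-stationary point of the regularized continuous reformulation R with (unique) multipliers (λ̄,μ̄,σ̄,ϱ̄) which additionally satisfies NDT6, i.e. σ̄_{1,i} ≠ 0 for all i ∈ a01(x̄,ȳ). Then the T-index of (x̄,ȳ) equals m: TI = m. -/

import Mathlib

open scoped Classical
open Finset Filter Topology

noncomputable section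
namespace Scholtes

/-- Vectors in ℝⁿ. -/
abbrev Vec (n : ℕ) := Fin n → ℝ

variable {n : ℕ} {P Q : Type*} [Fintype P] [Fintype Q]

/-- Euclidean dot product. -/
def dot (u v : Vec n) : ℝ := ∑ i, u i * v i

/-- Gradient: vector of partial derivatives. -/
def grad (f : Vec n → ℝ) (x : Vec n) : Vec n := fun i => fderiv ℝ f x (Pi.single i 1)

/-- Hessian bilinear form of `L` at `z`, evaluated at directions `ξ`, `ζ`. -/
def hess (L : Vec n × Vec n → ℝ) (z ξ ζ : Vec n × Vec n) : ℝ :=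
  fderiv ℝ (fun w => fderiv ℝ L w ξ) z ζ

/-- The pair vector (e_i, 0) ∈ ℝ²ⁿ. -/
def ex (i : Fin n) : Vec n × Vec n := (Pi.single i 1, 0)

/-- The pair vector (0, e_i) ∈ ℝ²ⁿ. -/
def ey (i : Fin n) : Vec n × Vec n := (0, Pi.single i 1)

/-- The pair vector (0, e) ∈ ℝ²ⁿ, where e is the all-ones vector. -/
def eAll : Vec n × Vec n := (0, fun _ => 1)

/-- The pair vector (y_i e_i, x_i e_i) ∈ ℝ²ⁿ. -/
def hvec (x y : Vec n) (i : Fin n) : Vec n × Vec n := (Pi.single i (y i), Pi.single i (x i))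

/-- The number of negative eigenvalues of the bilinear form `B` restricted to the
(sub)space `T`, expressed as the maximal dimension of a linear subspace of `T` on
which the associated quadratic form is negative definite. -/
def negIndex (B : (Vec n × Vec n) → (Vec n × Vec n) → ℝ) (T : (Vec n × Vec n) → Prop) : ℕ :=
  sSup {d : ℕ | ∃ W : Submodule ℝ (Vec n × Vec n),
    (∀ ξ ∈ W, T ξ) ∧ Module.finrank ℝ W = d ∧ ∀ ξ ∈ W, ξ ≠ 0 → B ξ ξ < 0}

/-- The data and standing assumptions of the paper: objective `f`, equality
constraints `h`, inequality constraints `g`, positive pairwise different linear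
coefficients `c`, cardinality bound `s` and regularization parameter `ε`. -/
structure Setting (n : ℕ) (P Q : Type*) [Fintype P] [Fintype Q] where
  f : Vec n → ℝ
  h : P → Vec n → ℝ
  g : Q → Vec n → ℝ
  c : Vec n
  s : ℕ
  ε : ℝ
  hn : 1 ≤ n
  hf : ContDiff ℝ 2 f
  hh : ∀ p, ContDiff ℝ 2 (h p)
  hg : ∀ q, ContDiff ℝ 2 (g q)
  hcpos : ∀ i, 0 < c i
  hcinj : Function.Injective c
  hs : s < n
  hεpos : 0 < ε
  hεle : ε ≤ 1 / ((n : ℝ) - s)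

/-- Index set a01: x̄_i = 0, ȳ_i > 0. -/
def a01 (x y : Vec n) : Finset (Fin n) := univ.filter fun i => x i = 0 ∧ 0 < y i

/-- Index set a10: x̄_i ≠ 0, ȳ_i = 0. -/
def a10 (x y : Vec n) : Finset (Fin n) := univ.filter fun i => x i ≠ 0 ∧ y i = 0

/-- Index set a00: x̄_i = 0, ȳ_i = 0. -/
def a00 (x y : Vec n) : Finset (Fin n) := univ.filter fun i => x i = 0 ∧ y i = 0

/-- Index set N(y): y_i = 0. -/
def Nact (y : Vec n) : Finset (Fin n) := univ.filter fun i => y i = 0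

/-- Index set H≥(x,y): x_i y_i = −t. -/
def Hge (t : ℝ) (x y : Vec n) : Finset (Fin n) := univ.filter fun i => x i * y i = -t

/-- Index set H≤(x,y): x_i y_i = t. -/
def Hle (t : ℝ) (x y : Vec n) : Finset (Fin n) := univ.filter fun i => x i * y i = t

/-- Index set H(x,y) = H≥ ∪ H≤. -/
def Hact (t : ℝ) (x y : Vec n) : Finset (Fin n) := Hge t x y ∪ Hle t x y

/-- Active inequality constraints Q0(x). -/
def Q0 (D : Setting n P Q) (x : Vec n) : Finset Q := univ.filter fun q => D.g q x = 0

/-- Active upper bounds E(y): y_i = 1 + ε. -/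
def Eact (D : Setting n P Q) (y : Vec n) : Finset (Fin n) := univ.filter fun i => y i = 1 + D.ε

/-- Index set O(x,y) = complement of E(y) ∪ N(y) ∪ H(x,y). -/
def Oact (D : Setting n P Q) (t : ℝ) (x y : Vec n) : Finset (Fin n) :=
  (Eact D y ∪ Nact y ∪ Hact t x y)ᶜ

/-- Feasibility for the regularized continuous reformulation R. -/
def feasR (D : Setting n P Q) (x y : Vec n) : Prop :=
  (∀ p, D.h p x = 0) ∧ (∀ q, 0 ≤ D.g q x) ∧ ((n : ℝ) - D.s ≤ ∑ i, y i) ∧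
  (∀ i, x i * y i = 0) ∧ (∀ i, 0 ≤ y i ∧ y i ≤ 1 + D.ε)

/-- Feasibility for the Scholtes-type regularization S(t). -/
def feasS (D : Setting n P Q) (t : ℝ) (x y : Vec n) : Prop :=
  (∀ p, D.h p x = 0) ∧ (∀ q, 0 ≤ D.g q x) ∧ ((n : ℝ) - D.s ≤ ∑ i, y i) ∧
  (∀ i, -t ≤ x i * y i ∧ x i * y i ≤ t) ∧ (∀ i, 0 ≤ y i ∧ y i ≤ 1 + D.ε)

/-- Multipliers for T-stationarity (defined on the whole index ranges). -/
structure TMult (n : ℕ) (P Q : Type*) where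
  lam : P → ℝ
  mu1 : Q → ℝ
  mu2 : Fin n → ℝ
  mu3 : ℝ
  sig1 : Fin n → ℝ
  sig2 : Fin n → ℝ
  rho1 : Fin n → ℝ
  rho2 : Fin n → ℝ

/-- The T-stationarity equation (1) of Definition 2. -/
def TStatEq (D : Setting n P Q) (x y : Vec n) (M : TMult n P Q) : Prop :=
  ((grad D.f x, D.c) : Vec n × Vec n) =
    (∑ p, M.lam p • ((grad (D.h p) x, (0 : Vec n)) : Vec n × Vec n))
    + (∑ q ∈ Q0 D x, M.mu1 q • ((grad (D.g q) x, (0 : Vec n)) : Vec n × Vec n))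
    - (∑ i ∈ Eact D y, M.mu2 i • ey i)
    + M.mu3 • eAll
    + (∑ i ∈ a01 x y, M.sig1 i • ex i)
    + (∑ i ∈ a10 x y, M.sig2 i • ey i)
    + (∑ i ∈ a00 x y, (M.rho1 i • ex i + M.rho2 i • ey i))

/-- (x,y) is a T-stationary point of R with multipliers M. -/
def TStatAt (D : Setting n P Q) (x y : Vec n) (M : TMult n P Q) : Prop :=
  feasR D x y ∧
  (∀ q ∈ Q0 D x, 0 ≤ M.mu1 q) ∧
  (∀ i ∈ Eact D y, 0 ≤ M.mu2 i) ∧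
  0 ≤ M.mu3 ∧
  M.mu3 * ((∑ i, y i) - ((n : ℝ) - D.s)) = 0 ∧
  (∀ i ∈ a00 x y, M.rho1 i = 0 ∨ M.rho2 i ≤ 0) ∧
  TStatEq D x y M

/-- (x,y) is a T-stationary point of R. -/
def TStat (D : Setting n P Q) (x y : Vec n) : Prop := ∃ M, TStatAt D x y M

/-- MPOC-tailored LICQ at a feasible point (x,y) of R: the indicated family of
vectors in ℝ²ⁿ is linearly independent. -/
def MPOC_LICQ (D : Setting n P Q) (x y : Vec n) : Prop :=
  ∀ (lam : P → ℝ) (mu1 : Q → ℝ) (mu2 : Fin n → ℝ) (mu3 : ℝ) (s1 s2 : Fin n → ℝ),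
    ((∑ i, y i) ≠ (n : ℝ) - D.s → mu3 = 0) →
    (∑ p, lam p • ((grad (D.h p) x, (0 : Vec n)) : Vec n × Vec n))
    + (∑ q ∈ Q0 D x, mu1 q • ((grad (D.g q) x, (0 : Vec n)) : Vec n × Vec n))
    + (∑ i ∈ Eact D y, mu2 i • ey i)
    + mu3 • eAll
    + (∑ i ∈ a01 x y ∪ a00 x y, s1 i • ex i)
    + (∑ i ∈ a10 x y ∪ a00 x y, s2 i • ey i) = 0 →
    (∀ p, lam p = 0) ∧ (∀ q ∈ Q0 D x, mu1 q = 0) ∧ (∀ i ∈ Eact D y, mu2 i = 0) ∧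
    mu3 = 0 ∧ (∀ i ∈ a01 x y ∪ a00 x y, s1 i = 0) ∧ (∀ i ∈ a10 x y ∪ a00 x y, s2 i = 0)

/-- The Lagrange function L^R associated with the T-stationary point (x̄,ȳ)
and multipliers M. -/
def LagR (D : Setting n P Q) (xb yb : Vec n) (M : TMult n P Q) (z : Vec n × Vec n) : ℝ :=
  D.f z.1 + dot D.c z.2
    - (∑ p, M.lam p * D.h p z.1)
    - (∑ q ∈ Q0 D xb, M.mu1 q * D.g q z.1)
    + (∑ i ∈ Eact D yb, M.mu2 i * (z.2 i - (1 + D.ε)))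
    - M.mu3 * ((∑ i, z.2 i) - ((n : ℝ) - D.s))
    - (∑ i ∈ a01 xb yb, M.sig1 i * z.1 i)
    - (∑ i ∈ a10 xb yb, M.sig2 i * z.2 i)
    - (∑ i ∈ a00 xb yb, (M.rho1 i * z.1 i + M.rho2 i * z.2 i))

/-- Membership in the tangent space T^R at (x̄,ȳ). -/
def inTR (D : Setting n P Q) (x y : Vec n) (ξ : Vec n × Vec n) : Prop :=
  (∀ p, dot (grad (D.h p) x) ξ.1 = 0) ∧
  (∀ q ∈ Q0 D x, dot (grad (D.g q) x) ξ.1 = 0) ∧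
  (∀ i ∈ Eact D y, ξ.2 i = 0) ∧
  ((∑ i, y i) = (n : ℝ) - D.s → (∑ i, ξ.2 i) = 0) ∧
  (∀ i ∈ a00 x y ∪ a01 x y, ξ.1 i = 0) ∧
  (∀ i ∈ a00 x y ∪ a10 x y, ξ.2 i = 0)

/-- Nondegenerate T-stationary point with multipliers M (NDT1–NDT4). -/
def NondegTStatAt (D : Setting n P Q) (x y : Vec n) (M : TMult n P Q) : Prop :=
  TStatAt D x y M ∧
  MPOC_LICQ D x y ∧
  (∀ q ∈ Q0 D x, 0 < M.mu1 q) ∧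
  (∀ i ∈ Eact D y, 0 < M.mu2 i) ∧
  ((∑ i, y i) = (n : ℝ) - D.s → 0 < M.mu3) ∧
  (∀ i ∈ a00 x y, M.rho1 i ≠ 0 ∧ M.rho2 i < 0) ∧
  (∀ ξ, inTR D x y ξ → (∀ ζ, inTR D x y ζ → hess (LagR D x y M) (x, y) ξ ζ = 0) → ξ = 0)

/-- T-index: quadratic index (number of negative eigenvalues of the restricted
Hessian of L^R) plus the biactive index |a00|. -/
def TIndex (D : Setting n P Q) (x y : Vec n) (M : TMult n P Q) : ℕ :=
  negIndex (hess (LagR D x y M) (x, y)) (inTR D x y) + (a00 x y).card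

/-- Multipliers for KKT points of S(t) (defined on the whole index ranges). -/
structure SMult (n : ℕ) (P Q : Type*) where
  lam : P → ℝ
  mu1 : Q → ℝ
  mu2 : Fin n → ℝ
  mu3 : ℝ
  etaGe : Fin n → ℝ
  etaLe : Fin n → ℝ
  nu : Fin n → ℝ

/-- The KKT equation for S(t). -/
def KKTEq (D : Setting n P Q) (t : ℝ) (x y : Vec n) (M : SMult n P Q) : Prop :=
  ((grad D.f x, D.c) : Vec n × Vec n) =
    (∑ p, M.lam p • ((grad (D.h p) x, (0 : Vec n)) : Vec n × Vec n))
    + (∑ q ∈ Q0 D x, M.mu1 q • ((grad (D.g q) x, (0 : Vec n)) : Vec n × Vec n))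
    - (∑ i ∈ Eact D y, M.mu2 i • ey i)
    + M.mu3 • eAll
    + (∑ i ∈ Hge t x y, M.etaGe i • hvec x y i)
    - (∑ i ∈ Hle t x y, M.etaLe i • hvec x y i)
    + (∑ i ∈ Nact y, M.nu i • ey i)

/-- (x,y) is a KKT point of S(t) with multipliers M. -/
def KKTAt (D : Setting n P Q) (t : ℝ) (x y : Vec n) (M : SMult n P Q) : Prop :=
  feasS D t x y ∧
  (∀ q ∈ Q0 D x, 0 ≤ M.mu1 q) ∧
  (∀ i ∈ Eact D y, 0 ≤ M.mu2 i) ∧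
  0 ≤ M.mu3 ∧
  M.mu3 * ((∑ i, y i) - ((n : ℝ) - D.s)) = 0 ∧
  (∀ i ∈ Hge t x y, 0 ≤ M.etaGe i) ∧
  (∀ i ∈ Hle t x y, 0 ≤ M.etaLe i) ∧
  (∀ i ∈ Nact y, 0 ≤ M.nu i) ∧
  KKTEq D t x y M

/-- (x,y) is a KKT point of S(t). -/
def KKT (D : Setting n P Q) (t : ℝ) (x y : Vec n) : Prop := ∃ M, KKTAt D t x y M

/-- LICQ at a feasible point (x,y) of S(t). -/
def LICQ (D : Setting n P Q) (t : ℝ) (x y : Vec n) : Prop :=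
  ∀ (lam : P → ℝ) (mu1 : Q → ℝ) (mu2 : Fin n → ℝ) (mu3 : ℝ) (eta nu : Fin n → ℝ),
    ((∑ i, y i) ≠ (n : ℝ) - D.s → mu3 = 0) →
    (∑ p, lam p • ((grad (D.h p) x, (0 : Vec n)) : Vec n × Vec n))
    + (∑ q ∈ Q0 D x, mu1 q • ((grad (D.g q) x, (0 : Vec n)) : Vec n × Vec n))
    + (∑ i ∈ Eact D y, mu2 i • ey i)
    + mu3 • eAll
    + (∑ i ∈ Hact t x y, eta i • hvec x y i)
    + (∑ i ∈ Nact y, nu i • ey i) = 0 →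
    (∀ p, lam p = 0) ∧ (∀ q ∈ Q0 D x, mu1 q = 0) ∧ (∀ i ∈ Eact D y, mu2 i = 0) ∧
    mu3 = 0 ∧ (∀ i ∈ Hact t x y, eta i = 0) ∧ (∀ i ∈ Nact y, nu i = 0)

/-- The Lagrange function L^S associated with the KKT point (x̄,ȳ) of S(t)
and multipliers M. -/
def LagS (D : Setting n P Q) (t : ℝ) (xb yb : Vec n) (M : SMult n P Q)
    (z : Vec n × Vec n) : ℝ :=
  D.f z.1 + dot D.c z.2
    - (∑ p, M.lam p * D.h p z.1)
    - (∑ q ∈ Q0 D xb, M.mu1 q * D.g q z.1)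
    + (∑ i ∈ Eact D yb, M.mu2 i * (z.2 i - (1 + D.ε)))
    - M.mu3 * ((∑ i, z.2 i) - ((n : ℝ) - D.s))
    - (∑ i ∈ Hge t xb yb, M.etaGe i * (z.1 i * z.2 i + t))
    + (∑ i ∈ Hle t xb yb, M.etaLe i * (z.1 i * z.2 i - t))
    - (∑ i ∈ Nact yb, M.nu i * z.2 i)

/-- Membership in the tangent space T^S at (x,y) for S(t). -/
def inTS (D : Setting n P Q) (t : ℝ) (x y : Vec n) (ξ : Vec n × Vec n) : Prop :=
  (∀ p, dot (grad (D.h p) x) ξ.1 = 0) ∧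
  (∀ q ∈ Q0 D x, dot (grad (D.g q) x) ξ.1 = 0) ∧
  (∀ i ∈ Eact D y, ξ.2 i = 0) ∧
  ((∑ i, y i) = (n : ℝ) - D.s → (∑ i, ξ.2 i) = 0) ∧
  (∀ i ∈ Hact t x y, y i * ξ.1 i + x i * ξ.2 i = 0) ∧
  (∀ i ∈ Nact y, ξ.2 i = 0)

/-- Nondegenerate KKT point of S(t) with multipliers M (ND1–ND3). -/
def NondegKKTAt (D : Setting n P Q) (t : ℝ) (x y : Vec n) (M : SMult n P Q) : Prop :=
  KKTAt D t x y M ∧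
  LICQ D t x y ∧
  (∀ q ∈ Q0 D x, 0 < M.mu1 q) ∧
  (∀ i ∈ Eact D y, 0 < M.mu2 i) ∧
  (∀ i ∈ Hge t x y, 0 < M.etaGe i) ∧
  (∀ i ∈ Hle t x y, 0 < M.etaLe i) ∧
  (∀ i ∈ Nact y, 0 < M.nu i) ∧
  ((∑ i, y i) = (n : ℝ) - D.s → 0 < M.mu3) ∧
  (∀ ξ, inTS D t x y ξ → (∀ ζ, inTS D t x y ζ → hess (LagS D t x y M) (x, y) ξ ζ = 0) → ξ = 0)

/-- Quadratic index of a KKT point of S(t): number of negative eigenvalues of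
the restricted Hessian of L^S. -/
def QIdx (D : Setting n P Q) (t : ℝ) (x y : Vec n) (M : SMult n P Q) : ℕ :=
  negIndex (hess (LagS D t x y M) (x, y)) (inTS D t x y)

/-!
MPOC-LICQ bounds the number of independent gradients active at a nearby KKT point and makes its
multipliers, read off as coefficients of the gradients of `R`, converge to those of `(x̄, ȳ)`. With
NDT6 the active sets therefore stabilise: `x_i y_i = ± t` is active for every `i` in `a01 ∪ a00`,
and `y_i = 0` or `x_i y_i = ± t` is active for every `i` in `a10`. Each `i ∈ a00` thus imposes one
condition on `T^S` instead of two on `T^R`, so `dim T^S ≥ dim T^R + |a00|`.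

Along tangent directions the Hessian of `L^S` is the `x`-Hessian minus
`2 ∑ (η≥_i - η≤_i) ξ_{1,i} ξ_{2,i}`. By tangency the terms of this sum tend to `0` off `a00`, while
for `i ∈ a00` they are nonnegative and blow up unless `ξ_{1,i}` and `ξ_{2,i}` tend to `0`. Limits
of subspaces, taken along an ultrafilter, then bound the index from both sides. A limit of
subspaces of `T^S` on which the Hessian is nonnegative lies in `T^R`, and the Hessian of `L^R` is
nonnegative on it; this gives `TI ≤ QI`. For `QI ≤ TI` the negative subspaces are first cut by
`ξ_{1,i} = 0`, `i ∈ a00`, which kills the cross terms at the cost of at most `|a00|` dimensions.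
-/

open Module (finrank Dual)

theorem exists_negDef_nonneg {𝕜 V : Type*} [Field 𝕜] [LinearOrder 𝕜] [IsStrictOrderedRing 𝕜]
    [AddCommGroup V] [Module 𝕜 V] [FiniteDimensional 𝕜 V] (q : QuadraticForm 𝕜 V) :
    ∃ R S : Submodule 𝕜 V, finrank 𝕜 R + finrank 𝕜 S = finrank 𝕜 V ∧
      (∀ v ∈ R, v ≠ 0 → q v < 0) ∧ (∀ v ∈ S, 0 ≤ q v) ∧
      (q.radical = ⊥ → ∀ v ∈ S, v ≠ 0 → 0 < q v) := by
  obtain ⟨A, hA, hApos⟩ := exists_finrank_eq_sigPos_and_posDef q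
  obtain ⟨R, hR, hRneg⟩ := exists_finrank_eq_sigNeg_and_negDef q
  have hApos : ∀ v ∈ A, v ≠ 0 → 0 < q v := fun v hv h0 =>
    hApos ⟨v, hv⟩ fun h => h0 (congrArg Subtype.val h)
  have hRneg : ∀ v ∈ R, v ≠ 0 → q v < 0 := fun v hv h0 =>
    neg_pos.mp (hRneg ⟨v, hv⟩ fun h => h0 (congrArg Subtype.val h))
  have hdisj : A ⊓ q.radical = ⊥ := by
    refine (Submodule.eq_bot_iff _).mpr fun v ⟨hvA, hvr⟩ => by_contra fun h0 => ?_
    exact (hApos v hvA h0).ne' (QuadraticMap.mem_radical_iff'.mp hvr).1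
  refine ⟨R, A ⊔ q.radical, ?_, hRneg, fun v hv => ?_, fun hrad => ?_⟩
  · have hsup := Submodule.finrank_sup_add_finrank_inf_eq A q.radical
    have hsum := QuadraticForm.sigPos_add_sigNeg_add_radical (Q := q)
    rw [hdisj, finrank_bot] at hsup
    omega
  · obtain ⟨a, ha, r, hr, rfl⟩ := Submodule.mem_sup.mp hv
    rw [add_comm, (QuadraticMap.mem_radical_iff'.mp hr).2]
    rcases eq_or_ne a 0 with rfl | h0
    exacts [(map_zero q).ge, (hApos a ha h0).le]
  · rwa [hrad, sup_bot_eq]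

theorem exists_negDef_nonneg_le {𝕜 V : Type*} [Field 𝕜] [LinearOrder 𝕜] [IsStrictOrderedRing 𝕜]
    [AddCommGroup V] [Module 𝕜 V] [FiniteDimensional 𝕜 V] (q : QuadraticForm 𝕜 V)
    (T : Submodule 𝕜 V) :
    ∃ R ≤ T, ∃ S ≤ T, finrank 𝕜 R + finrank 𝕜 S = finrank 𝕜 T ∧
      (∀ v ∈ R, v ≠ 0 → q v < 0) ∧ (∀ v ∈ S, 0 ≤ q v) ∧
      ((∀ v ∈ T, (∀ w ∈ T, QuadraticMap.polar q v w = 0) → v = 0) → ∀ v ∈ S, v ≠ 0 → 0 < q v) := by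
  obtain ⟨R, S, hdim, hR, hS, hS'⟩ := exists_negDef_nonneg (q.restrict T)
  refine ⟨R.map T.subtype, Submodule.map_subtype_le _ _, S.map T.subtype,
    Submodule.map_subtype_le _ _, ?_, ?_, ?_, fun hT => ?_⟩
  · rwa [Submodule.finrank_map_subtype_eq, Submodule.finrank_map_subtype_eq]
  · rintro _ ⟨v, hv, rfl⟩ h0
    exact hR v hv fun h => h0 (by simp [h])
  · rintro _ ⟨v, hv, rfl⟩
    exact hS v hv
  · rintro _ ⟨v, hv, rfl⟩ h0
    refine hS' ((Submodule.eq_bot_iff _).mpr fun u hu => ?_) v hv fun h => h0 (by simp [h])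
    have hpolar := QuadraticMap.radical_le_ker_polarBilin hu
    exact Subtype.ext (hT u u.2 fun w hw => LinearMap.congr_fun hpolar ⟨w, hw⟩)

theorem finrank_add_finrank_le_of_disjoint_of_le {𝕜 V : Type*} [DivisionRing 𝕜]
    [AddCommGroup V] [Module 𝕜 V] [FiniteDimensional 𝕜 V] {T R S : Submodule 𝕜 V}
    (hRT : R ≤ T) (hST : S ≤ T) (hdisj : Disjoint R S) :
    finrank 𝕜 R + finrank 𝕜 S ≤ finrank 𝕜 T := by
  rw [← Submodule.finrank_sup_add_finrank_inf_eq R S, hdisj.eq_bot, finrank_bot, add_zero]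
  exact Submodule.finrank_mono (sup_le hRT hST)

theorem finrank_span_image_add_finrank_iInf_ker {𝕜 V J : Type*} [Field 𝕜] [AddCommGroup V]
    [Module 𝕜 V] [FiniteDimensional 𝕜 V] (φ : J → Dual 𝕜 V) (S : Finset J) :
    finrank 𝕜 (Submodule.span 𝕜 (φ '' S)) + finrank 𝕜 ↥(⨅ j ∈ S, (φ j).ker) = finrank 𝕜 V := by
  have hker : ⨅ j ∈ S, (φ j).ker = (Submodule.span 𝕜 (φ '' S)).dualCoannihilator :=
    SetLike.coe_injective <| by
      rw [Submodule.coe_dualCoannihilator_span]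
      ext v
      simp
  rw [hker, Subspace.finrank_add_finrank_dualCoannihilator_eq]

theorem finrank_le_finrank_iInf_ker_add_card {𝕜 V J : Type*} [Field 𝕜] [AddCommGroup V]
    [Module 𝕜 V] [FiniteDimensional 𝕜 V] (φ : J → Dual 𝕜 V) (S : Finset J) :
    finrank 𝕜 V ≤ finrank 𝕜 ↥(⨅ j ∈ S, (φ j).ker) + #S := by
  have hspan : finrank 𝕜 (Submodule.span 𝕜 (φ '' S)) ≤ #S := by
    rw [← Finset.coe_image]
    exact (finrank_span_finset_le_card (S.image φ)).trans Finset.card_image_le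
  have hdim := finrank_span_image_add_finrank_iInf_ker φ S
  omega

theorem finrank_le_finrank_inf_iInf_ker_add_card {𝕜 V J : Type*} [Field 𝕜] [AddCommGroup V]
    [Module 𝕜 V] [FiniteDimensional 𝕜 V] (W : Submodule 𝕜 V) (φ : J → Dual 𝕜 V) (S : Finset J) :
    finrank 𝕜 W ≤ finrank 𝕜 ↥(W ⊓ ⨅ j ∈ S, (φ j).ker) + #S := by
  have hker := finrank_le_finrank_iInf_ker_add_card φ S
  have hsup := Submodule.finrank_sup_add_finrank_inf_eq W (⨅ j ∈ S, (φ j).ker)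
  have hle := Submodule.finrank_le (W ⊔ ⨅ j ∈ S, (φ j).ker)
  omega

theorem finrank_iInf_ker_add_card_of_linearIndepOn {𝕜 V J : Type*} [Field 𝕜] [AddCommGroup V]
    [Module 𝕜 V] [FiniteDimensional 𝕜 V] {φ : J → Dual 𝕜 V} {S : Finset J}
    (hφ : LinearIndepOn 𝕜 φ S) :
    finrank 𝕜 ↥(⨅ j ∈ S, (φ j).ker) + #S = finrank 𝕜 V := by
  have hspan : finrank 𝕜 (Submodule.span 𝕜 (φ '' S)) = #S := by
    rw [Set.image_eq_range, finrank_span_eq_card hφ]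
    exact Fintype.card_coe S
  have hdim := finrank_span_image_add_finrank_iInf_ker φ S
  omega

theorem tendsto_of_tendsto_apply {ι E F : Type*} [NormedAddCommGroup E] [NormedSpace ℝ E]
    [NormedAddCommGroup F] [NormedSpace ℝ F] {l : Filter ι} {A : ι → E →L[ℝ] F} {A₀ : E →L[ℝ] F}
    {a : ι → E} {a₀ : E} {K : NNReal} (hK : AntilipschitzWith K A₀) (hA : Tendsto A l (𝓝 A₀))
    (h : Tendsto (fun k => A k (a k)) l (𝓝 (A₀ a₀))) : Tendsto a l (𝓝 a₀) := by
  have hAK : Tendsto (fun k => K * ‖A k - A₀‖) l (𝓝 0) := by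
    simpa using (tendsto_iff_norm_sub_tendsto_zero.mp hA).const_mul (K : ℝ)
  have hres : Tendsto (fun k => 2 * (K * ‖A k (a k) - A k a₀‖)) l (𝓝 0) := by
    have hA₀ : Tendsto (fun k => A k a₀) l (𝓝 (A₀ a₀)) :=
      ((ContinuousLinearMap.apply ℝ F a₀).continuous.tendsto A₀).comp hA
    simpa using (((h.sub hA₀).norm).const_mul (K : ℝ)).const_mul 2
  refine tendsto_iff_norm_sub_tendsto_zero.mpr (squeeze_zero' (.of_forall fun _ => norm_nonneg _)
    ?_ hres)
  filter_upwards [hAK.eventually_le_const (show (0 : ℝ) < 1 / 2 by norm_num)] with k hk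
  have hanti : ‖a k - a₀‖ ≤ K * ‖A₀ (a k - a₀)‖ := by
    simpa [dist_eq_norm] using hK.le_mul_dist (a k) a₀
  have hsplit : ‖A₀ (a k - a₀)‖ ≤ ‖A k (a k) - A k a₀‖ + ‖A k - A₀‖ * ‖a k - a₀‖ := by
    calc ‖A₀ (a k - a₀)‖ = ‖(A k (a k) - A k a₀) - (A k - A₀) (a k - a₀)‖ := by
          congr 1; simp
      _ ≤ _ := (norm_sub_le _ _).trans (by gcongr; exact (A k - A₀).le_opNorm _)
  nlinarith [norm_nonneg (a k - a₀), mul_le_mul_of_nonneg_left hsplit K.coe_nonneg,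
    mul_le_mul_of_nonneg_right hk (norm_nonneg (a k - a₀))]

theorem tendsto_coeff_of_linearIndepOn {ι J F : Type*} [NormedAddCommGroup F] [NormedSpace ℝ F]
    {l : Filter ι} {S : Finset J} {v : ι → J → F} {v₀ : J → F} {a : ι → J → ℝ} {a₀ : J → ℝ}
    (hv₀ : LinearIndepOn ℝ v₀ S) (hv : ∀ j ∈ S, Tendsto (fun k => v k j) l (𝓝 (v₀ j)))
    (h : Tendsto (fun k => ∑ j ∈ S, a k j • v k j) l (𝓝 (∑ j ∈ S, a₀ j • v₀ j)))
    {j : J} (hj : j ∈ S) : Tendsto (fun k => a k j) l (𝓝 (a₀ j)) := by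
  let comb : (J → F) → (S → ℝ) →L[ℝ] F := fun w =>
    ∑ j : S, (ContinuousLinearMap.proj j).smulRight (w j)
  have comb_apply (w : J → F) (b : J → ℝ) : comb w (fun j => b j) = ∑ j ∈ S, b j • w j := by
    simpa [comb] using Finset.sum_attach S fun j => b j • w j
  have hker : LinearMap.ker (comb v₀ : (S → ℝ) →ₗ[ℝ] F) = ⊥ := by
    refine LinearMap.ker_eq_bot'.mpr fun b hb => ?_
    exact funext (Fintype.linearIndependent_iff.mp hv₀ b (by simpa [comb] using hb))
  obtain ⟨K, -, hK⟩ := LinearMap.exists_antilipschitzWith _ hker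
  have hcomb : Tendsto (fun k => comb (v k)) l (𝓝 (comb v₀)) :=
    tendsto_finsetSum _ fun j _ =>
      ((ContinuousLinearMap.smulRightL ℝ (S → ℝ) F (ContinuousLinearMap.proj j)).continuous.tendsto
        _).comp (hv j j.2)
  have := tendsto_of_tendsto_apply (a := fun k (j : S) => a k j) (a₀ := fun j => a₀ j) hK hcomb
    (by simpa only [comb_apply] using h)
  exact tendsto_pi_nhds.mp this ⟨j, hj⟩

theorem exists_limit_submodule_of_inner {ι E : Type*} [NormedAddCommGroup E]
    [InnerProductSpace ℝ E] [FiniteDimensional ℝ E] (l : Ultrafilter ι) {W : ι → Submodule ℝ E}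
    {d : ℕ} (hd : ∀ᶠ k in l, d ≤ finrank ℝ (W k)) :
    ∃ U : Submodule ℝ E, finrank ℝ U = d ∧
      ∀ w ∈ U, ∃ u : ι → E, (∀ᶠ k in l, u k ∈ W k) ∧ Tendsto u l (𝓝 w) := by
  have hbasis (k : ι) : ∃ e : Fin d → E, (∀ j, ‖e j‖ ≤ 1) ∧
      (d ≤ finrank ℝ (W k) → Orthonormal ℝ e ∧ ∀ j, e j ∈ W k) := by
    by_cases hk : d ≤ finrank ℝ (W k)
    · have he : Orthonormal ℝ fun j => (stdOrthonormalBasis ℝ (W k) (Fin.castLE hk j) : E) :=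
        ((stdOrthonormalBasis ℝ (W k)).orthonormal.comp _
          (Fin.castLE_injective hk)).comp_linearIsometry (W k).subtypeₗᵢ
      exact ⟨_, fun j => (he.1 j).le, fun _ => ⟨he, fun j => SetLike.coe_mem _⟩⟩
    · exact ⟨0, by simp, fun h => absurd h hk⟩
  choose e hnorm he using hbasis
  have hlim (j : Fin d) : ∃ v : E, Tendsto (fun k => e k j) l (𝓝 v) := by
    obtain ⟨v, -, hv⟩ := (isCompact_closedBall (0 : E) 1).ultrafilter_le_nhds
      (l.map fun k => e k j) (tendsto_principal.mpr (.of_forall fun k => by simp [hnorm]))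
    exact ⟨v, hv⟩
  choose v hv using hlim
  have hvo : Orthonormal ℝ v := by
    refine orthonormal_iff_ite.mpr fun i j => tendsto_nhds_unique ((hv i).inner (hv j)) ?_
    refine tendsto_const_nhds.congr' ?_
    filter_upwards [hd] with k hk
    exact (orthonormal_iff_ite.mp (he k hk).1 i j).symm
  refine ⟨Submodule.span ℝ (Set.range v), ?_, fun w hw => ?_⟩
  · rw [finrank_span_eq_card hvo.linearIndependent, Fintype.card_fin]
  · obtain ⟨a, rfl⟩ := (Submodule.mem_span_range_iff_exists_fun ℝ).mp hw
    refine ⟨fun k => ∑ j, a j • e k j, ?_, tendsto_finsetSum _ fun j _ => (hv j).const_smul (a j)⟩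
    filter_upwards [hd] with k hk
    exact Submodule.sum_mem _ fun j _ => Submodule.smul_mem _ _ ((he k hk).2 j)

theorem exists_limit_submodule {ι V : Type*} [NormedAddCommGroup V] [NormedSpace ℝ V]
    [FiniteDimensional ℝ V] (l : Ultrafilter ι) {W : ι → Submodule ℝ V} {d : ℕ}
    (hd : ∀ᶠ k in l, d ≤ finrank ℝ (W k)) :
    ∃ U : Submodule ℝ V, finrank ℝ U = d ∧
      ∀ w ∈ U, ∃ u : ι → V, (∀ᶠ k in l, u k ∈ W k) ∧ Tendsto u l (𝓝 w) := by
  let e := toEuclidean (E := V)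
  obtain ⟨U, hU, hlim⟩ := exists_limit_submodule_of_inner l
    (W := fun k => (W k).map e.toLinearEquiv.toLinearMap) (d := d)
    (by simpa only [LinearEquiv.finrank_map_eq] using hd)
  refine ⟨U.map e.symm.toLinearEquiv.toLinearMap, by rw [LinearEquiv.finrank_map_eq, hU], ?_⟩
  rintro _ ⟨w, hw, rfl⟩
  obtain ⟨u, hu, htends⟩ := hlim w hw
  refine ⟨fun k => e.symm (u k), hu.mono fun k hk => ?_, (e.symm.continuous.tendsto w).comp htends⟩
  obtain ⟨x, hx, hxu⟩ := hk
  simpa [← hxu] using hx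

theorem mem_a01 {x y : Vec n} {i : Fin n} : i ∈ a01 x y ↔ x i = 0 ∧ 0 < y i := by simp [a01]

theorem mem_a10 {x y : Vec n} {i : Fin n} : i ∈ a10 x y ↔ x i ≠ 0 ∧ y i = 0 := by simp [a10]

theorem mem_a00 {x y : Vec n} {i : Fin n} : i ∈ a00 x y ↔ x i = 0 ∧ y i = 0 := by simp [a00]

theorem mem_Hact {t : ℝ} {x y : Vec n} {i : Fin n} :
    i ∈ Hact t x y ↔ x i * y i = -t ∨ x i * y i = t := by simp [Hact, Hge, Hle]

theorem mem_Nact {y : Vec n} {i : Fin n} : i ∈ Nact y ↔ y i = 0 := by simp [Nact]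

theorem mem_Eact {D : Setting n P Q} {y : Vec n} {i : Fin n} :
    i ∈ Eact D y ↔ y i = 1 + D.ε := by simp [Eact]

theorem mem_Q0 {D : Setting n P Q} {x : Vec n} {q : Q} : q ∈ Q0 D x ↔ D.g q x = 0 := by
  simp [Q0]

theorem feasR.mem_a01_or_mem_a10_or_mem_a00 {D : Setting n P Q} {x y : Vec n} (h : feasR D x y)
    (i : Fin n) : i ∈ a01 x y ∨ i ∈ a10 x y ∨ i ∈ a00 x y := by
  have hxy := mul_eq_zero.mp (h.2.2.2.1 i)
  have hy := (h.2.2.2.2 i).1.lt_or_eq'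
  rw [mem_a01, mem_a10, mem_a00]
  tauto

/-- Index type of the constraints of `R` and of `S(t)`: equalities `h`, inequalities `g`, upper
bounds on `y`, the cardinality constraint, and two further constraints for each coordinate. -/
abbrev ConIdx (n : ℕ) (P Q : Type*) := P ⊕ Q ⊕ Fin n ⊕ Unit ⊕ Fin n ⊕ Fin n

/-- Index set of the cardinality constraint `∑ y_i ≥ n - s` when active, and empty otherwise. -/
def cardAct (D : Setting n P Q) (y : Vec n) : Finset Unit :=
  univ.filter fun _ => ∑ i, y i = (n : ℝ) - D.s

theorem mem_cardAct {D : Setting n P Q} {y : Vec n} {j : Unit} :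
    j ∈ cardAct D y ↔ ∑ i, y i = (n : ℝ) - D.s :=
  Finset.mem_filter_univ j

/-- The set of constraint indices with the given blocks; all equality constraints belong to it. -/
def conSet {P Q : Type*} [Fintype P] (S : Finset Q) (E : Finset (Fin n)) (C : Finset Unit)
    (A B : Finset (Fin n)) : Finset (ConIdx n P Q) :=
  univ.disjSum (S.disjSum (E.disjSum (C.disjSum (A.disjSum B))))

/-- The gradients of the constraints at `x`, with `u` and `w` those of the two coordinate blocks. -/
def conFam (D : Setting n P Q) (x : Vec n) (u w : Fin n → Vec n × Vec n) :
    ConIdx n P Q → Vec n × Vec n :=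
  Sum.elim (fun p => (grad (D.h p) x, 0)) (Sum.elim (fun q => (grad (D.g q) x, 0))
    (Sum.elim ey (Sum.elim (fun _ => eAll) (Sum.elim u w))))

/-- Multipliers assembled into one coefficient family for `conFam`. -/
def conCoeff {P Q : Type*} (lam : P → ℝ) (mu1 : Q → ℝ) (mu2 : Fin n → ℝ) (mu3 : ℝ)
    (a b : Fin n → ℝ) : ConIdx n P Q → ℝ :=
  Sum.elim lam (Sum.elim mu1 (Sum.elim mu2 (Sum.elim (fun _ => mu3) (Sum.elim a b))))

theorem sum_conSet {P Q F : Type*} [Fintype P] [AddCommMonoid F] (S : Finset Q) (E : Finset (Fin n))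
    (C : Finset Unit) (A B : Finset (Fin n)) (φ : ConIdx n P Q → F) :
    ∑ j ∈ conSet S E C A B, φ j =
      ∑ p, φ (.inl p) + (∑ q ∈ S, φ (.inr (.inl q)) + (∑ i ∈ E, φ (.inr (.inr (.inl i))) +
        (∑ c ∈ C, φ (.inr (.inr (.inr (.inl c)))) +
          (∑ i ∈ A, φ (.inr (.inr (.inr (.inr (.inl i))))) +
            ∑ i ∈ B, φ (.inr (.inr (.inr (.inr (.inr i))))))))) := by
  simp only [conSet, Finset.sum_disjSum]

theorem sum_conCoeff_smul_conFam (D : Setting n P Q) (x : Vec n) (u w : Fin n → Vec n × Vec n)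
    (S : Finset Q) (E A B : Finset (Fin n)) {C : Finset Unit} (lam : P → ℝ) (mu1 : Q → ℝ)
    (mu2 : Fin n → ℝ) {mu3 : ℝ} (hC : C = ∅ → mu3 = 0) (a b : Fin n → ℝ) :
    ∑ j ∈ conSet S E C A B, conCoeff lam mu1 mu2 mu3 a b j • conFam D x u w j =
      ∑ p, lam p • (grad (D.h p) x, (0 : Vec n)) + ∑ q ∈ S, mu1 q • (grad (D.g q) x, (0 : Vec n))
        + ∑ i ∈ E, mu2 i • ey i + mu3 • eAll + ∑ i ∈ A, a i • u i + ∑ i ∈ B, b i • w i := by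
  have hcard : ∑ _ ∈ C, mu3 • (eAll : Vec n × Vec n) = mu3 • eAll := by
    rcases C.eq_empty_or_nonempty with rfl | hne
    · simp [hC rfl]
    · simp [hne.eq_univ]
  rw [sum_conSet]
  simp only [conCoeff, conFam, Sum.elim_inl, Sum.elim_inr, hcard, add_assoc]

/-- Indices of the constraints of `R` whose gradients enter MPOC-LICQ. -/
def mpocSet (D : Setting n P Q) (x y : Vec n) : Finset (ConIdx n P Q) :=
  conSet (Q0 D x) (Eact D y) (cardAct D y) (a01 x y ∪ a00 x y) (a10 x y ∪ a00 x y)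

/-- Indices of the constraints of `S(t)` active at `(x, y)`. -/
def activeSet (D : Setting n P Q) (t : ℝ) (x y : Vec n) : Finset (ConIdx n P Q) :=
  conSet (Q0 D x) (Eact D y) (cardAct D y) (Hact t x y) (Nact y)

theorem MPOC_LICQ.linearIndepOn {D : Setting n P Q} {x y : Vec n} (h : MPOC_LICQ D x y) :
    LinearIndepOn ℝ (conFam D x ex ey) (mpocSet D x y) := by
  refine linearIndepOn_finset_iff.mpr fun b hb => ?_
  rw [mpocSet, sum_conSet] at hb
  obtain ⟨hp, hq, hE, hC, hA, hB⟩ := h (fun p => b (.inl p)) (fun q => b (.inr (.inl q)))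
    (fun i => b (.inr (.inr (.inl i)))) (∑ c ∈ cardAct D y, b (.inr (.inr (.inr (.inl c)))))
    (fun i => b (.inr (.inr (.inr (.inr (.inl i))))))
    (fun i => b (.inr (.inr (.inr (.inr (.inr i))))))
    (fun hne => Finset.sum_eq_zero fun _ hc => absurd (mem_cardAct.mp hc) hne)
    (by simpa only [conFam, Sum.elim_inl, Sum.elim_inr, Finset.sum_smul, add_assoc] using hb)
  rintro (p | q | i | c | i | i) hj <;>
    simp only [mpocSet, conSet, Finset.inl_mem_disjSum, Finset.inr_mem_disjSum] at hj
  · exact hp p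
  · exact hq q hj
  · exact hE i hj
  · simpa only [Finset.Nonempty.eq_univ ⟨c, hj⟩, univ_unique, sum_singleton] using hC
  · exact hA i hj
  · exact hB i hj

theorem card_conSet {P Q : Type*} [Fintype P] (S : Finset Q) (E : Finset (Fin n)) (C : Finset Unit)
    (A B : Finset (Fin n)) :
    #(conSet (P := P) S E C A B) = Fintype.card P + (#S + (#E + (#C + (#A + #B)))) := by
  simp only [conSet, Finset.card_disjSum, Finset.card_univ]

/-- Euclidean pairing on `ℝⁿ × ℝⁿ`, identifying a pair of vectors with a linear functional. -/
def pairing : (Vec n × Vec n) ≃ₗ[ℝ] Dual ℝ (Vec n × Vec n) :=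
  ((dotProductEquiv ℝ (Fin n)).prodCongr (dotProductEquiv ℝ (Fin n))).trans
    (Module.dualProdDualEquivDual ℝ (Vec n) (Vec n))

theorem pairing_apply (v ξ : Vec n × Vec n) : pairing v ξ = dot v.1 ξ.1 + dot v.2 ξ.2 := by
  simp [pairing, dot, dotProduct]

theorem pairing_ex (i : Fin n) (ξ : Vec n × Vec n) : pairing (ex i) ξ = ξ.1 i := by
  simp [pairing_apply, dot, ex, Pi.single_apply]

theorem pairing_ey (i : Fin n) (ξ : Vec n × Vec n) : pairing (ey i) ξ = ξ.2 i := by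
  simp [pairing_apply, dot, ey, Pi.single_apply]

theorem pairing_prod_zero (v : Vec n) (ξ : Vec n × Vec n) : pairing (v, 0) ξ = dot v ξ.1 := by
  simp [pairing_apply, dot]

theorem pairing_eAll (ξ : Vec n × Vec n) : pairing eAll ξ = ∑ i, ξ.2 i := by
  simp [pairing_apply, dot, eAll]

theorem hvec_eq (x y : Vec n) (i : Fin n) : hvec x y i = y i • ex i + x i • ey i := by
  simp [hvec, ex, ey, ← Pi.single_smul]

/-- The tangent space `T^R` as a submodule. -/
def tangentR (D : Setting n P Q) (x y : Vec n) : Submodule ℝ (Vec n × Vec n) :=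
  ⨅ j ∈ mpocSet D x y, (pairing (conFam D x ex ey j)).ker

/-- The tangent space `T^S` as a submodule. -/
def tangentS (D : Setting n P Q) (t : ℝ) (x y : Vec n) : Submodule ℝ (Vec n × Vec n) :=
  ⨅ j ∈ activeSet D t x y, (pairing (conFam D x (hvec x y) ey j)).ker

theorem mem_iInf_ker_conFam {D : Setting n P Q} {x : Vec n} {u w : Fin n → Vec n × Vec n}
    {S : Finset Q} {E A B : Finset (Fin n)} {C : Finset Unit} {ξ : Vec n × Vec n} :
    ξ ∈ ⨅ j ∈ conSet S E C A B, (pairing (conFam D x u w j)).ker ↔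
      (∀ p, dot (grad (D.h p) x) ξ.1 = 0) ∧ (∀ q ∈ S, dot (grad (D.g q) x) ξ.1 = 0) ∧
      (∀ i ∈ E, ξ.2 i = 0) ∧ (() ∈ C → ∑ i, ξ.2 i = 0) ∧
      (∀ i ∈ A, pairing (u i) ξ = 0) ∧ (∀ i ∈ B, pairing (w i) ξ = 0) := by
  simp only [Submodule.mem_iInf, LinearMap.mem_ker, conSet, Sum.forall, Finset.inl_mem_disjSum,
    Finset.inr_mem_disjSum, conFam, Sum.elim_inl, Sum.elim_inr, mem_univ, pairing_ey,
    pairing_prod_zero, pairing_eAll, Unique.forall_iff, PUnit.default_eq_unit]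

theorem mem_tangentR {D : Setting n P Q} {x y : Vec n} {ξ : Vec n × Vec n} :
    ξ ∈ tangentR D x y ↔ inTR D x y ξ := by
  rw [tangentR, mpocSet, mem_iInf_ker_conFam]
  simp [inTR, pairing_ex, pairing_ey, mem_cardAct, Finset.union_comm]

theorem mem_tangentS {D : Setting n P Q} {t : ℝ} {x y : Vec n} {ξ : Vec n × Vec n} :
    ξ ∈ tangentS D t x y ↔ inTS D t x y ξ := by
  rw [tangentS, activeSet, mem_iInf_ker_conFam]
  simp [inTS, hvec_eq, pairing_ex, pairing_ey, mem_cardAct]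

theorem MPOC_LICQ.finrank_tangentR_add_card {D : Setting n P Q} {x y : Vec n}
    (h : MPOC_LICQ D x y) :
    finrank ℝ (tangentR D x y) + #(mpocSet D x y) = finrank ℝ (Vec n × Vec n) :=
  finrank_iInf_ker_add_card_of_linearIndepOn (φ := fun j => pairing (conFam D x ex ey j))
    (h.linearIndepOn.map_injOn pairing.toLinearMap pairing.injective.injOn)

theorem finrank_le_finrank_tangentS_add_card (D : Setting n P Q) (t : ℝ) (x y : Vec n) :
    finrank ℝ (Vec n × Vec n) ≤ finrank ℝ (tangentS D t x y) + #(activeSet D t x y) :=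
  finrank_le_finrank_iInf_ker_add_card (fun j => pairing (conFam D x (hvec x y) ey j)) _

/-- Multiplier of `x_i = 0` at a T-stationary point: `σ₁` on `a01`, `ϱ₁` on `a00`, else `0`. -/
def TMult.multX (M : TMult n P Q) (x y : Vec n) : Vec n :=
  (a01 x y : Set (Fin n)).indicator M.sig1 + (a00 x y : Set (Fin n)).indicator M.rho1

/-- Multiplier of `y_i = 0` at a T-stationary point: `σ₂` on `a10`, `ϱ₂` on `a00`, else `0`. -/
def TMult.multY (M : TMult n P Q) (x y : Vec n) : Vec n :=
  (a10 x y : Set (Fin n)).indicator M.sig2 + (a00 x y : Set (Fin n)).indicator M.rho2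

theorem sum_indicator_smul {ι F : Type*} [AddCommMonoid F] [Module ℝ F] {s t : Finset ι}
    (hst : s ⊆ t) (a : ι → ℝ) (v : ι → F) :
    ∑ i ∈ t, (s : Set ι).indicator a i • v i = ∑ i ∈ s, a i • v i :=
  Finset.sum_indicator_subset_of_eq_zero a (fun i b => b • v i) hst fun i =>
    zero_smul ℝ (v i)

theorem TStatEq.sum_mpocSet {D : Setting n P Q} {x y : Vec n} {M : TMult n P Q}
    (h : TStatEq D x y M) (hmu3 : cardAct D y = ∅ → M.mu3 = 0) :
    ∑ j ∈ mpocSet D x y,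
      conCoeff M.lam M.mu1 (-M.mu2) M.mu3 (M.multX x y) (M.multY x y) j • conFam D x ex ey j =
      (grad D.f x, D.c) := by
  rw [mpocSet, sum_conCoeff_smul_conFam _ _ _ _ _ _ _ _ _ _ _ hmu3, h]
  simp only [TMult.multX, TMult.multY, Pi.add_apply, Pi.neg_apply, add_smul, neg_smul,
    Finset.sum_add_distrib, Finset.sum_neg_distrib, sum_indicator_smul Finset.subset_union_left,
    sum_indicator_smul Finset.subset_union_right]
  abel

theorem TStatEq.c_eq {D : Setting n P Q} {x y : Vec n} {M : TMult n P Q}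
    (h : TStatEq D x y M) (i : Fin n) :
    D.c i = M.mu3 + M.multY x y i - (Eact D y : Set (Fin n)).indicator M.mu2 i := by
  have hi := congrFun (congrArg Prod.snd h) i
  simp only [Prod.snd_add, Prod.snd_sub, Prod.snd_sum, Prod.smul_snd, ex, ey, eAll, Pi.add_apply,
    Pi.sub_apply, Finset.sum_apply, Pi.smul_apply, Pi.zero_apply, Pi.single_apply, smul_eq_mul,
    mul_ite, mul_one, mul_zero, Finset.sum_ite_eq, Finset.sum_const_zero, zero_add, add_zero] at hi
  simp only [hi, TMult.multY, Pi.add_apply, Set.indicator_apply, Finset.mem_coe]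
  ring

theorem TStatAt.sum_eq {D : Setting n P Q} {x y : Vec n} {M : TMult n P Q}
    (h : TStatAt D x y M) : ∑ i, y i = (n : ℝ) - D.s := by
  obtain ⟨hfeas, -, hmu2, -, hmu3, -, heq⟩ := h
  by_contra hne
  have hmu3 : M.mu3 = 0 := (mul_eq_zero.mp hmu3).resolve_right (sub_ne_zero.mpr hne)
  have hsum : 0 < ∑ i, y i := lt_of_lt_of_le (sub_pos.mpr (by exact_mod_cast D.hs)) hfeas.2.2.1
  obtain ⟨i, -, hi⟩ := Finset.exists_ne_zero_of_sum_ne_zero hsum.ne'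
  have hmultY : M.multY x y i = 0 := by simp [TMult.multY, mem_a10, mem_a00, hi]
  have hmu2 : 0 ≤ (Eact D y : Set (Fin n)).indicator M.mu2 i := Set.indicator_apply_nonneg (hmu2 i)
  linarith [D.hcpos i, heq.c_eq i]

theorem sum_ey : ∑ i, ey i = (eAll : Vec n × Vec n) := by
  ext i <;> simp [ey, eAll, Prod.fst_sum, Prod.snd_sum, Finset.sum_apply, Pi.single_apply]

theorem MPOC_LICQ.exists_mem_a01 {D : Setting n P Q} {x y : Vec n} (h : MPOC_LICQ D x y)
    (hfeas : feasR D x y) (hsum : ∑ i, y i = (n : ℝ) - D.s) :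
    ∃ i ∈ a01 x y, i ∉ Eact D y := by
  by_contra! hE
  have hdisj : Disjoint (Eact D y) (a10 x y ∪ a00 x y) := by
    have hε := D.hεpos
    refine Finset.disjoint_left.mpr fun i hi => ?_
    grind [mem_a10, mem_a00, mem_Eact]
  have hunion : Eact D y ∪ (a10 x y ∪ a00 x y) = univ := by
    refine Finset.eq_univ_of_forall fun i => ?_
    have := hfeas.mem_a01_or_mem_a10_or_mem_a00 i
    grind
  have hsum_ey : ∑ i ∈ Eact D y, ey i - eAll + ∑ i ∈ a10 x y ∪ a00 x y, ey i = 0 := by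
    rw [← sum_ey, ← hunion, Finset.sum_union hdisj]
    abel
  obtain ⟨-, -, -, hcard, -⟩ := h 0 0 1 (-1) 0 1 (absurd hsum)
    (by simpa [sub_eq_add_neg] using hsum_ey)
  norm_num at hcard

theorem TStatAt.multY_ne_zero {D : Setting n P Q} {x y : Vec n} {M : TMult n P Q}
    (h : TStatAt D x y M) (hL : MPOC_LICQ D x y) {i : Fin n} (hi : y i = 0) :
    M.multY x y i ≠ 0 := by
  intro hzero
  obtain ⟨j, hj, hjE⟩ := hL.exists_mem_a01 h.1 h.sum_eq
  have hyj := (mem_a01.mp hj).2.ne'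
  have hiE : i ∉ Eact D y := by
    rw [mem_Eact, hi]
    linarith [D.hεpos]
  have hci := h.2.2.2.2.2.2.c_eq i
  have hcj := h.2.2.2.2.2.2.c_eq j
  rw [hzero, Set.indicator_of_notMem (by simpa using hiE)] at hci
  rw [Set.indicator_of_notMem (by simpa using hjE),
    show M.multY x y j = 0 by simp [TMult.multY, mem_a10, mem_a00, hyj]] at hcj
  exact hyj (D.hcinj (hci.trans hcj.symm) ▸ hi)

theorem NondegTStatAt.multX_ne_zero {D : Setting n P Q} {x y : Vec n} {M : TMult n P Q}
    (h : NondegTStatAt D x y M) (hndt6 : ∀ i ∈ a01 x y, M.sig1 i ≠ 0) {i : Fin n} (hi : x i = 0) :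
    M.multX x y i ≠ 0 := by
  rcases (h.1.1.2.2.2.2 i).1.eq_or_lt' with hy | hy
  · simpa [TMult.multX, mem_a01, mem_a00, hi, hy] using (h.2.2.2.2.2.1 i (mem_a00.mpr ⟨hi, hy⟩)).1
  · simpa [TMult.multX, mem_a01, mem_a00, hi, hy, hy.ne'] using hndt6 i (mem_a01.mpr ⟨hi, hy⟩)

theorem continuous_grad {F : Vec n → ℝ} (hF : ContDiff ℝ 2 F) : Continuous (grad F) :=
  continuous_pi fun _ => (hF.continuous_fderiv (by norm_num)).clm_apply continuous_const

theorem eventually_Q0_subset (D : Setting n P Q) (xb : Vec n) :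
    ∀ᶠ x in 𝓝 xb, Q0 D x ⊆ Q0 D xb := by
  simp only [Finset.subset_iff, eventually_all, mem_Q0]
  intro q
  by_cases hq : D.g q xb = 0
  · simp [hq]
  · filter_upwards [(D.hg q).continuous.continuousAt.eventually_ne hq] with x hx h
    exact absurd h hx

theorem eventually_Eact_subset (D : Setting n P Q) (yb : Vec n) :
    ∀ᶠ y in 𝓝 yb, Eact D y ⊆ Eact D yb := by
  simp only [Finset.subset_iff, eventually_all, mem_Eact]
  intro i
  by_cases hi : yb i = 1 + D.ε
  · simp [hi]
  · filter_upwards [(continuous_apply i).continuousAt.eventually_ne hi] with y hy h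
    exact absurd h hy

theorem hess_eq_fderiv_fderiv {L : Vec n × Vec n → ℝ} (hL : ContDiff ℝ 2 L)
    (z ξ ζ : Vec n × Vec n) : hess L z ξ ζ = fderiv ℝ (fderiv ℝ L) z ζ ξ := by
  have hdiff : DifferentiableAt ℝ (fderiv ℝ L) z :=
    (hL.fderiv_right (m := 1) le_rfl).differentiable one_ne_zero z
  simp [hess, fderiv_clm_apply hdiff (differentiableAt_const ξ)]

theorem hess_comm {L : Vec n × Vec n → ℝ} (hL : ContDiff ℝ 2 L) (z ξ ζ : Vec n × Vec n) :
    hess L z ξ ζ = hess L z ζ ξ := by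
  rw [hess_eq_fderiv_fderiv hL, hess_eq_fderiv_fderiv hL]
  exact hL.contDiffAt.isSymmSndFDerivAt (by simp) ζ ξ

theorem negIndex_eq_finrank {B : Vec n × Vec n → Vec n × Vec n → ℝ}
    {T R S : Submodule ℝ (Vec n × Vec n)} (hRT : R ≤ T) (hST : S ≤ T)
    (hcard : finrank ℝ R + finrank ℝ S = finrank ℝ T)
    (hR : ∀ ξ ∈ R, ξ ≠ 0 → B ξ ξ < 0) (hS : ∀ ξ ∈ S, 0 ≤ B ξ ξ) :
    negIndex B (· ∈ T) = finrank ℝ R := by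
  refine IsGreatest.csSup_eq ⟨⟨R, hRT, rfl, hR⟩, ?_⟩
  rintro _ ⟨W, hWT, rfl, hW⟩
  have := finrank_add_finrank_le_of_disjoint_of_le hWT hST <| Submodule.disjoint_def.mpr
    fun ξ hξW hξS => by_contra fun h0 => (hW ξ hξW h0).not_ge (hS ξ hξS)
  omega

theorem exists_finrank_eq_negIndex_hess {L : Vec n × Vec n → ℝ} (hL : ContDiff ℝ 2 L)
    (z : Vec n × Vec n) {T : Submodule ℝ (Vec n × Vec n)} {inT : Vec n × Vec n → Prop}
    (hT : ∀ ξ, ξ ∈ T ↔ inT ξ) :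
    ∃ R ≤ T, ∃ S ≤ T, finrank ℝ R = negIndex (hess L z) inT ∧
      negIndex (hess L z) inT + finrank ℝ S = finrank ℝ T ∧
      (∀ ξ ∈ R, ξ ≠ 0 → hess L z ξ ξ < 0) ∧ (∀ ξ ∈ S, 0 ≤ hess L z ξ ξ) ∧
      ((∀ ξ, inT ξ → (∀ ζ, inT ζ → hess L z ξ ζ = 0) → ξ = 0) →
        ∀ ξ ∈ S, ξ ≠ 0 → 0 < hess L z ξ ξ) := by
  obtain rfl : (· ∈ T) = inT := funext fun ξ => propext (hT ξ)
  have happly (ξ) : (fderiv ℝ (fderiv ℝ L) z).toBilinForm.toQuadraticMap ξ = hess L z ξ ξ :=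
    (hess_eq_fderiv_fderiv hL z ξ ξ).symm
  have hpolar (ξ ζ) : QuadraticMap.polar (fderiv ℝ (fderiv ℝ L) z).toBilinForm.toQuadraticMap ξ ζ =
      2 * hess L z ξ ζ := by
    rw [LinearMap.BilinMap.polar_toQuadraticMap, two_mul]
    exact congrArg₂ (· + ·) ((hess_eq_fderiv_fderiv hL z ζ ξ).symm.trans (hess_comm hL z ζ ξ))
      (hess_eq_fderiv_fderiv hL z ξ ζ).symm
  obtain ⟨R, hRT, S, hST, hcard, hR, hS, hSpos⟩ :=
    exists_negDef_nonneg_le (fderiv ℝ (fderiv ℝ L) z).toBilinForm.toQuadraticMap T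
  simp only [happly, hpolar, mul_eq_zero, OfNat.ofNat_ne_zero, false_or] at hR hS hSpos
  have hindex := negIndex_eq_finrank hRT hST hcard hR hS
  exact ⟨R, hRT, S, hST, hindex.symm, hindex.symm ▸ hcard, hR, hS, hSpos⟩

theorem fderiv_eq_of_eq_add_bilinear {L : Vec n × Vec n → ℝ} {F : Vec n → ℝ}
    (hF : Differentiable ℝ F) {a b κ : Vec n} {C : ℝ}
    (hL : ∀ z, L z = F z.1 + dot a z.1 + dot b z.2 + ∑ i, κ i * (z.1 i * z.2 i) + C)
    (z ξ : Vec n × Vec n) :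
    fderiv ℝ L z ξ =
      fderiv ℝ F z.1 ξ.1 + dot a ξ.1 + dot b ξ.2 + ∑ i, κ i * (z.1 i * ξ.2 i + z.2 i * ξ.1 i) := by
  have hx (i : Fin n) := (hasFDerivAt_apply (𝕜 := ℝ) i z.1).comp z hasFDerivAt_fst
  have hy (i : Fin n) := (hasFDerivAt_apply (𝕜 := ℝ) i z.2).comp z hasFDerivAt_snd
  have hF' := (hF z.1).hasFDerivAt.comp z hasFDerivAt_fst
  have ha := HasFDerivAt.fun_sum (u := univ) fun i _ => (hx i).const_mul (a i)
  have hb := HasFDerivAt.fun_sum (u := univ) fun i _ => (hy i).const_mul (b i)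
  have hκ := HasFDerivAt.fun_sum (u := univ) fun i _ => ((hx i).mul (hy i)).const_mul (κ i)
  have h := ((((hF'.add ha).add hb).add hκ).add_const C).congr_of_eventuallyEq
    (Eventually.of_forall hL)
  simp [h.fderiv, dot, mul_add]

theorem hess_eq_of_eq_add_bilinear {L : Vec n × Vec n → ℝ} {F : Vec n → ℝ}
    (hF : ContDiff ℝ 2 F) {a b κ : Vec n} {C : ℝ}
    (hL : ∀ z, L z = F z.1 + dot a z.1 + dot b z.2 + ∑ i, κ i * (z.1 i * z.2 i) + C)
    (z ξ ζ : Vec n × Vec n) :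
    hess L z ξ ζ = fderiv ℝ (fderiv ℝ F) z.1 ζ.1 ξ.1 +
      ∑ i, κ i * (ζ.1 i * ξ.2 i + ζ.2 i * ξ.1 i) := by
  have hx (i : Fin n) := (hasFDerivAt_apply (𝕜 := ℝ) i z.1).comp z hasFDerivAt_fst
  have hy (i : Fin n) := (hasFDerivAt_apply (𝕜 := ℝ) i z.2).comp z hasFDerivAt_snd
  have hF' := (((hF.fderiv_right (m := 1) le_rfl).differentiable one_ne_zero z.1).hasFDerivAt.comp z
    hasFDerivAt_fst).clm_apply (hasFDerivAt_const ξ.1 z)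
  have hκ := HasFDerivAt.fun_sum (u := univ) fun i _ =>
    (((hx i).mul_const (ξ.2 i)).add ((hy i).mul_const (ξ.1 i))).const_mul (κ i)
  have h := ((hF'.add_const (dot a ξ.1)).add_const (dot b ξ.2)).add hκ
  rw [hess, funext fun w => fderiv_eq_of_eq_add_bilinear (hF.differentiable two_ne_zero) hL w ξ]
  refine (congrArg (· ζ) h.fderiv).trans ?_
  simp [mul_comm, mul_add]

/-- The part `f - ∑ λ_p h_p - ∑ μ_{1,q} g_q` of the Lagrange functions of `R` and `S(t)`; it is the
only one contributing to the second derivatives in `x`. -/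
def lagrangianX (D : Setting n P Q) (lam : P → ℝ) (mu1 : Q → ℝ) (x : Vec n) : ℝ :=
  D.f x - ∑ p, lam p * D.h p x - ∑ q, mu1 q * D.g q x

theorem contDiff_uncurry_lagrangianX (D : Setting n P Q) :
    ContDiff ℝ 2 fun p : ((P → ℝ) × (Q → ℝ)) × Vec n => lagrangianX D p.1.1 p.1.2 p.2 := by
  have := D.hf
  have := D.hh
  have := D.hg
  unfold lagrangianX
  fun_prop

theorem contDiff_lagrangianX (D : Setting n P Q) (lam : P → ℝ) (mu1 : Q → ℝ) :
    ContDiff ℝ 2 (lagrangianX D lam mu1) :=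
  (contDiff_uncurry_lagrangianX D).comp (contDiff_prodMk_right (lam, mu1))

theorem continuous_fderiv_fderiv_lagrangianX (D : Setting n P Q) :
    Continuous fun p : (((P → ℝ) × (Q → ℝ)) × Vec n) × Vec n =>
      fderiv ℝ (fderiv ℝ (lagrangianX D p.1.1.1 p.1.1.2)) p.1.2 p.2 p.2 := by
  have hfst : ContDiff ℝ 1 fun p : ((P → ℝ) × (Q → ℝ)) × Vec n =>
      fderiv ℝ (lagrangianX D p.1.1 p.1.2) p.2 :=
    .fderiv (f := fun p : ((P → ℝ) × (Q → ℝ)) × Vec n => lagrangianX D p.1.1 p.1.2)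
      ((contDiff_uncurry_lagrangianX D).comp (contDiff_fst.fst.prodMk contDiff_snd))
      contDiff_snd le_rfl
  have hsnd : ContDiff ℝ 0 fun p : ((P → ℝ) × (Q → ℝ)) × Vec n =>
      fderiv ℝ (fderiv ℝ (lagrangianX D p.1.1 p.1.2)) p.2 :=
    .fderiv (f := fun p : ((P → ℝ) × (Q → ℝ)) × Vec n => fderiv ℝ (lagrangianX D p.1.1 p.1.2))
      (hfst.comp (contDiff_fst.fst.prodMk contDiff_snd)) contDiff_snd (by simp)
  exact ((hsnd.continuous.comp continuous_fst).clm_apply continuous_snd).clm_apply continuous_snd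

theorem tendsto_fderiv_fderiv_lagrangianX (D : Setting n P Q) {ι : Type*} {l : Filter ι}
    {lam : ι → P → ℝ} {lam₀ : P → ℝ} {mu1 : ι → Q → ℝ} {mu1₀ : Q → ℝ} {x v : ι → Vec n}
    {x₀ v₀ : Vec n} (hlam : Tendsto lam l (𝓝 lam₀)) (hmu1 : Tendsto mu1 l (𝓝 mu1₀))
    (hx : Tendsto x l (𝓝 x₀)) (hv : Tendsto v l (𝓝 v₀)) :
    Tendsto (fun k => fderiv ℝ (fderiv ℝ (lagrangianX D (lam k) (mu1 k))) (x k) (v k) (v k)) l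
      (𝓝 (fderiv ℝ (fderiv ℝ (lagrangianX D lam₀ mu1₀)) x₀ v₀ v₀)) := by
  have hcont := (continuous_fderiv_fderiv_lagrangianX D).tendsto (((lam₀, mu1₀), x₀), v₀)
  simpa only [Function.comp_def] using
    hcont.comp (((hlam.prodMk_nhds hmu1).prodMk_nhds hx).prodMk_nhds hv)

theorem contDiff_LagR (D : Setting n P Q) (x y : Vec n) (M : TMult n P Q) :
    ContDiff ℝ 2 (LagR D x y M) := by
  have := D.hf
  have := D.hh
  have := D.hg
  unfold LagR dot
  fun_prop

theorem contDiff_LagS (D : Setting n P Q) (t : ℝ) (x y : Vec n) (M : SMult n P Q) :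
    ContDiff ℝ 2 (LagS D t x y M) := by
  have := D.hf
  have := D.hh
  have := D.hg
  unfold LagS dot
  fun_prop

theorem sum_indicator_mul {ι : Type*} [Fintype ι] (s : Finset ι) (a v : ι → ℝ) :
    ∑ i, (s : Set ι).indicator a i * v i = ∑ i ∈ s, a i * v i :=
  sum_indicator_smul (Finset.subset_univ s) a v

theorem hess_LagR_self (D : Setting n P Q) (x y : Vec n) (M : TMult n P Q) (ξ : Vec n × Vec n) :
    hess (LagR D x y M) (x, y) ξ ξ = fderiv ℝ (fderiv ℝ
      (lagrangianX D M.lam ((Q0 D x : Set Q).indicator M.mu1))) x ξ.1 ξ.1 := by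
  have hL (z : Vec n × Vec n) : LagR D x y M z =
      lagrangianX D M.lam ((Q0 D x : Set Q).indicator M.mu1) z.1 + dot (-M.multX x y) z.1 +
        dot (fun i => D.c i + (Eact D y : Set (Fin n)).indicator M.mu2 i - M.mu3 - M.multY x y i)
          z.2 + ∑ i, (0 : Vec n) i * (z.1 i * z.2 i) +
        (M.mu3 * ((n : ℝ) - D.s) - ∑ i ∈ Eact D y, M.mu2 i * (1 + D.ε)) := by
    simp only [LagR, lagrangianX, dot, TMult.multX, TMult.multY, Pi.add_apply, Pi.neg_apply,
      Pi.zero_apply, neg_mul, zero_mul, add_mul, sub_mul, mul_sub, Finset.sum_add_distrib,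
      Finset.sum_sub_distrib, Finset.sum_neg_distrib, Finset.sum_const_zero, ← Finset.mul_sum,
      sum_indicator_mul]
    ring
  simpa using hess_eq_of_eq_add_bilinear (contDiff_lagrangianX D _ _) hL (x, y) ξ ξ

theorem NondegTStatAt.exists_finrank_eq_TIndex {D : Setting n P Q} {x y : Vec n}
    {M : TMult n P Q} (hnd : NondegTStatAt D x y M) :
    ∃ R ≤ tangentR D x y, ∃ S ≤ tangentR D x y,
      finrank ℝ R + #(a00 x y) = TIndex D x y M ∧
      TIndex D x y M + finrank ℝ S = finrank ℝ (tangentR D x y) + #(a00 x y) ∧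
      (∀ ξ ∈ R, ξ ≠ 0 → hess (LagR D x y M) (x, y) ξ ξ < 0) ∧
      ∀ ξ ∈ S, ξ ≠ 0 → 0 < hess (LagR D x y M) (x, y) ξ ξ := by
  obtain ⟨R, hRT, S, hST, hindex, hcard, hR, -, hS⟩ :=
    exists_finrank_eq_negIndex_hess (contDiff_LagR D x y M) (x, y) fun _ => mem_tangentR (D := D)
  refine ⟨R, hRT, S, hST, ?_, ?_, hR, hS hnd.2.2.2.2.2.2⟩ <;> rw [TIndex] <;> omega

theorem exists_finrank_eq_QIdx (D : Setting n P Q) (t : ℝ) (x y : Vec n) (M : SMult n P Q) :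
    ∃ R ≤ tangentS D t x y, ∃ S ≤ tangentS D t x y,
      finrank ℝ R = QIdx D t x y M ∧
      QIdx D t x y M + finrank ℝ S = finrank ℝ (tangentS D t x y) ∧
      (∀ ξ ∈ R, hess (LagS D t x y M) (x, y) ξ ξ ≤ 0) ∧
      ∀ ξ ∈ S, 0 ≤ hess (LagS D t x y M) (x, y) ξ ξ := by
  have hL := contDiff_LagS D t x y M
  obtain ⟨R, hRT, S, hST, hindex, hcard, hR, hS, -⟩ :=
    exists_finrank_eq_negIndex_hess hL (x, y) fun _ => mem_tangentS (D := D)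
  refine ⟨R, hRT, S, hST, hindex, hcard, fun ξ hξ => ?_, hS⟩
  rcases eq_or_ne ξ 0 with rfl | h0
  · simp [hess_eq_fderiv_fderiv hL]
  · exact (hR ξ hξ h0).le

/-- A KKT point of `S(t)` for some `t > 0`, bundled with `t` and its multipliers. -/
structure KKTPoint (D : Setting n P Q) where
  t : ℝ
  x : Vec n
  y : Vec n
  mult : SMult n P Q
  t_pos : 0 < t
  kkt : KKTAt D t x y mult

namespace KKTPoint

section
variable {D : Setting n P Q} (κ : KKTPoint D)

/-- Multipliers of the inequalities `g`, extended by zero to the inactive ones. -/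
def mu1 : Q → ℝ := (Q0 D κ.x : Set Q).indicator κ.mult.mu1

/-- Multipliers of the bounds `y_i ≤ 1 + ε`, extended by zero to the inactive ones. -/
def mu2 : Vec n := (Eact D κ.y : Set (Fin n)).indicator κ.mult.mu2

/-- The signed multiplier `η≥ - η≤` of `x_i y_i`, extended by zero to `i ∉ H`. -/
def eta : Vec n :=
  (Hge κ.t κ.x κ.y : Set (Fin n)).indicator κ.mult.etaGe -
    (Hle κ.t κ.x κ.y : Set (Fin n)).indicator κ.mult.etaLe

/-- Multipliers of the bounds `0 ≤ y_i`, extended by zero to the inactive ones. -/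
def nu : Vec n := (Nact κ.y : Set (Fin n)).indicator κ.mult.nu

/-- Coefficient of `(e_i, 0)` in the KKT equation; it takes the role of `TMult.multX`. -/
def multX : Vec n := κ.eta * κ.y

/-- Coefficient of `(0, e_i)` in the KKT equation; it takes the role of `TMult.multY`. -/
def multY : Vec n := κ.eta * κ.x + κ.nu

theorem y_mul_nu (i : Fin n) : κ.y i * κ.nu i = 0 := by
  by_cases hi : κ.y i = 0 <;> simp [nu, mem_Nact, hi]

theorem mem_Hact_of_eta_ne_zero {i : Fin n} (h : κ.eta i ≠ 0) : i ∈ Hact κ.t κ.x κ.y := by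
  contrapose! h
  rw [Hact, Finset.mem_union, not_or] at h
  simp [eta, h]

theorem y_mul_multY (i : Fin n) : κ.y i * κ.multY i = κ.x i * κ.multX i := by
  have := κ.y_mul_nu i
  simp only [multX, multY, Pi.add_apply, Pi.mul_apply]
  linear_combination this

theorem gradient_eq :
    ((grad D.f κ.x, D.c) : Vec n × Vec n) =
      ∑ p, κ.mult.lam p • (grad (D.h p) κ.x, (0 : Vec n)) +
        ∑ q ∈ Q0 D κ.x, κ.mult.mu1 q • (grad (D.g q) κ.x, (0 : Vec n)) -
        ∑ i ∈ Eact D κ.y, κ.mult.mu2 i • ey i + κ.mult.mu3 • eAll +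
        ∑ i, (κ.multX i • ex i + κ.multY i • ey i) := by
  have hterm (i : Fin n) : κ.multX i • ex i + κ.multY i • ey i =
      (Hge κ.t κ.x κ.y : Set (Fin n)).indicator κ.mult.etaGe i • hvec κ.x κ.y i -
        (Hle κ.t κ.x κ.y : Set (Fin n)).indicator κ.mult.etaLe i • hvec κ.x κ.y i +
        κ.nu i • ey i := by
    rw [hvec_eq, ← sub_smul]
    simp only [multX, multY, eta, Pi.add_apply, Pi.mul_apply, Pi.sub_apply]
    module
  simp only [hterm, nu, Finset.sum_add_distrib, Finset.sum_sub_distrib,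
    sum_indicator_smul (Finset.subset_univ _)]
  rw [κ.kkt.2.2.2.2.2.2.2.2]
  abel

/-- The combination of the gradients of `x_i y_i` and `y_i` whose multiplier is `multX`. -/
def rowX (xb yb : Vec n) (i : Fin n) : Vec n × Vec n :=
  ex i + (if i ∈ a01 xb yb then κ.x i / κ.y i else 0) • ey i

/-- The combination of the gradients of `x_i y_i` and `y_i` whose multiplier is `multY`. -/
def rowY (xb yb : Vec n) (i : Fin n) : Vec n × Vec n :=
  ey i + (if i ∈ a10 xb yb then κ.y i / κ.x i else 0) • ex i

theorem sum_rowX_add_sum_rowY {xb yb : Vec n} (hfeas : feasR D xb yb)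
    (hy : ∀ i ∈ a01 xb yb, κ.y i ≠ 0) (hx : ∀ i ∈ a10 xb yb, κ.x i ≠ 0) :
    ∑ i ∈ a01 xb yb ∪ a00 xb yb, κ.multX i • κ.rowX xb yb i +
      ∑ i ∈ a10 xb yb ∪ a00 xb yb, κ.multY i • κ.rowY xb yb i =
      ∑ i, (κ.multX i • ex i + κ.multY i • ey i) := by
  rw [← Fintype.sum_ite_mem (a01 xb yb ∪ _), ← Fintype.sum_ite_mem (a10 xb yb ∪ _),
    ← Finset.sum_add_distrib]
  refine Finset.sum_congr rfl fun i _ => ?_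
  have hmul := κ.y_mul_multY i
  rcases hfeas.mem_a01_or_mem_a10_or_mem_a00 i with hi | hi | hi
  · have hdiv : κ.multX i * (κ.x i / κ.y i) = κ.multY i := by
      have := hy i hi
      field_simp
      linear_combination -hmul
    have hi' := mem_a01.mp hi
    simp [rowX, hi, mem_a10, mem_a00, hi'.2.ne', smul_smul, hdiv]
  · have hdiv : κ.multY i * (κ.y i / κ.x i) = κ.multX i := by
      have := hx i hi
      field_simp
      linear_combination hmul
    have hi' := mem_a10.mp hi
    simp [rowY, hi, mem_a01, mem_a00, hi', smul_smul, hdiv, add_comm]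
  · have hi' := mem_a00.mp hi
    simp [rowX, rowY, hi, mem_a01, mem_a10, hi']

theorem sum_mpocSet {xb yb : Vec n} (hfeas : feasR D xb yb)
    (hsum : ∑ i, yb i = (n : ℝ) - D.s) (hQ : Q0 D κ.x ⊆ Q0 D xb) (hE : Eact D κ.y ⊆ Eact D yb)
    (hy : ∀ i ∈ a01 xb yb, κ.y i ≠ 0) (hx : ∀ i ∈ a10 xb yb, κ.x i ≠ 0) :
    ∑ j ∈ mpocSet D xb yb, conCoeff κ.mult.lam κ.mu1 (-κ.mu2) κ.mult.mu3 κ.multX κ.multY j •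
      conFam D κ.x (κ.rowX xb yb) (κ.rowY xb yb) j = (grad D.f κ.x, D.c) := by
  have hcard : cardAct D yb ≠ ∅ := Finset.ne_empty_of_mem (a := ()) (mem_cardAct.mpr hsum)
  rw [mpocSet, sum_conCoeff_smul_conFam _ _ _ _ _ _ _ _ _ _ _ fun h => absurd h hcard,
    κ.gradient_eq, ← κ.sum_rowX_add_sum_rowY hfeas hy hx]
  simp only [mu1, mu2, Pi.neg_apply, neg_smul, Finset.sum_neg_distrib, sum_indicator_smul hQ,
    sum_indicator_smul hE]
  abel

theorem hess_LagS_self (ξ : Vec n × Vec n) :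
    hess (LagS D κ.t κ.x κ.y κ.mult) (κ.x, κ.y) ξ ξ =
      fderiv ℝ (fderiv ℝ (lagrangianX D κ.mult.lam κ.mu1)) κ.x ξ.1 ξ.1 -
        2 * ∑ i, κ.eta i * (ξ.1 i * ξ.2 i) := by
  have hL (z : Vec n × Vec n) : LagS D κ.t κ.x κ.y κ.mult z =
      lagrangianX D κ.mult.lam κ.mu1 z.1 + dot 0 z.1 +
        dot (fun i => D.c i + κ.mu2 i - κ.mult.mu3 - κ.nu i) z.2 +
        ∑ i, (-κ.eta) i * (z.1 i * z.2 i) +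
        (κ.mult.mu3 * ((n : ℝ) - D.s) - ∑ i ∈ Eact D κ.y, κ.mult.mu2 i * (1 + D.ε) -
          ∑ i ∈ Hge κ.t κ.x κ.y, κ.mult.etaGe i * κ.t -
          ∑ i ∈ Hle κ.t κ.x κ.y, κ.mult.etaLe i * κ.t) := by
    simp only [LagS, lagrangianX, dot, mu1, mu2, nu, eta, Pi.sub_apply, Pi.neg_apply,
      Pi.zero_apply, neg_mul, zero_mul, add_mul, sub_mul, mul_sub, mul_add, Finset.sum_add_distrib,
      Finset.sum_sub_distrib, Finset.sum_neg_distrib, Finset.sum_const_zero, ← Finset.mul_sum,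
      sum_indicator_mul]
    ring
  rw [hess_eq_of_eq_add_bilinear (contDiff_lagrangianX D _ _) hL, sub_eq_add_neg, Finset.mul_sum,
    ← Finset.sum_neg_distrib]
  congr! 2 with i
  simp only [Pi.neg_apply]
  ring

end

/-- The filter of KKT points, for arbitrary `t > 0`, converging to `(xb, yb)`. -/
def near (D : Setting n P Q) (xb yb : Vec n) : Filter (KKTPoint D) :=
  comap (fun κ => (κ.x, κ.y)) (𝓝 (xb, yb))

section
variable {D : Setting n P Q} {xb yb : Vec n} {Mb : TMult n P Q}

theorem tendsto_x : Tendsto (fun κ : KKTPoint D => κ.x) (near D xb yb) (𝓝 xb) :=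
  (continuous_fst.tendsto (xb, yb)).comp tendsto_comap

theorem tendsto_y : Tendsto (fun κ : KKTPoint D => κ.y) (near D xb yb) (𝓝 yb) :=
  (continuous_snd.tendsto (xb, yb)).comp tendsto_comap

theorem tendsto_x_apply (i : Fin n) :
    Tendsto (fun κ : KKTPoint D => κ.x i) (near D xb yb) (𝓝 (xb i)) :=
  tendsto_pi_nhds.mp tendsto_x i

theorem tendsto_y_apply (i : Fin n) :
    Tendsto (fun κ : KKTPoint D => κ.y i) (near D xb yb) (𝓝 (yb i)) :=
  tendsto_pi_nhds.mp tendsto_y i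

theorem tendsto_rowX (i : Fin n) :
    Tendsto (fun κ : KKTPoint D => κ.rowX xb yb i) (near D xb yb) (𝓝 (ex i)) := by
  by_cases hi : i ∈ a01 xb yb
  · obtain ⟨hx, hy⟩ := mem_a01.mp hi
    have hdiv := ((tendsto_x_apply (D := D) (xb := xb) (yb := yb) i).div
      (tendsto_y_apply i) hy.ne').smul_const (ey i)
    simpa [rowX, hi, hx] using hdiv.const_add (ex i)
  · simp [rowX, hi, tendsto_const_nhds]

theorem tendsto_rowY (i : Fin n) :
    Tendsto (fun κ : KKTPoint D => κ.rowY xb yb i) (near D xb yb) (𝓝 (ey i)) := by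
  by_cases hi : i ∈ a10 xb yb
  · obtain ⟨hx, hy⟩ := mem_a10.mp hi
    have hdiv := ((tendsto_y_apply (D := D) (xb := xb) (yb := yb) i).div
      (tendsto_x_apply i) hx).smul_const (ex i)
    simpa [rowY, hi, hy] using hdiv.const_add (ey i)
  · simp [rowY, hi, tendsto_const_nhds]

theorem tendsto_conFam (j : ConIdx n P Q) :
    Tendsto (fun κ : KKTPoint D => conFam D κ.x (κ.rowX xb yb) (κ.rowY xb yb) j) (near D xb yb)
      (𝓝 (conFam D xb ex ey j)) := by
  have hgrad {F : Vec n → ℝ} (hF : ContDiff ℝ 2 F) :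
      Tendsto (fun κ : KKTPoint D => (grad F κ.x, (0 : Vec n))) (near D xb yb)
        (𝓝 (grad F xb, 0)) :=
    (((continuous_grad hF).tendsto xb).comp tendsto_x).prodMk_nhds tendsto_const_nhds
  rcases j with p | q | i | _ | i | i
  exacts [hgrad (D.hh p), hgrad (D.hg q), tendsto_const_nhds, tendsto_const_nhds, tendsto_rowX i,
    tendsto_rowY i]

theorem tendsto_conCoeff (hT : TStatAt D xb yb Mb) (hL : MPOC_LICQ D xb yb) {j : ConIdx n P Q}
    (hj : j ∈ mpocSet D xb yb) :
    Tendsto (fun κ : KKTPoint D =>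
        conCoeff κ.mult.lam κ.mu1 (-κ.mu2) κ.mult.mu3 κ.multX κ.multY j) (near D xb yb)
      (𝓝 (conCoeff Mb.lam Mb.mu1 (-Mb.mu2) Mb.mu3 (Mb.multX xb yb) (Mb.multY xb yb) j)) := by
  refine tendsto_coeff_of_linearIndepOn hL.linearIndepOn (fun j _ => tendsto_conFam j) ?_ hj
  have hcard : cardAct D yb ≠ ∅ := Finset.ne_empty_of_mem (a := ()) (mem_cardAct.mpr hT.sum_eq)
  rw [hT.2.2.2.2.2.2.sum_mpocSet fun h => absurd h hcard]
  have hgrad : Tendsto (fun κ : KKTPoint D => (grad D.f κ.x, D.c)) (near D xb yb)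
      (𝓝 (grad D.f xb, D.c)) :=
    (((continuous_grad D.hf).tendsto xb).comp tendsto_x).prodMk_nhds tendsto_const_nhds
  refine hgrad.congr' ?_
  have hy : ∀ᶠ κ : KKTPoint D in near D xb yb, ∀ i ∈ a01 xb yb, κ.y i ≠ 0 :=
    (eventually_all_finset _).mpr fun i hi =>
      (tendsto_y_apply i).eventually_ne (mem_a01.mp hi).2.ne'
  have hx : ∀ᶠ κ : KKTPoint D in near D xb yb, ∀ i ∈ a10 xb yb, κ.x i ≠ 0 :=
    (eventually_all_finset _).mpr fun i hi => (tendsto_x_apply i).eventually_ne (mem_a10.mp hi).1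
  filter_upwards [hy, hx, tendsto_x.eventually (eventually_Q0_subset D xb),
    tendsto_y.eventually (eventually_Eact_subset D yb)] with κ hy hx hQ hE
  exact (κ.sum_mpocSet hT.1 hT.sum_eq hQ hE hy hx).symm

theorem tendsto_lam (hT : TStatAt D xb yb Mb) (hL : MPOC_LICQ D xb yb) :
    Tendsto (fun κ : KKTPoint D => κ.mult.lam) (near D xb yb) (𝓝 Mb.lam) :=
  tendsto_pi_nhds.mpr fun p => tendsto_conCoeff (j := .inl p) hT hL (by simp [mpocSet, conSet])

theorem tendsto_mu1 (hT : TStatAt D xb yb Mb) (hL : MPOC_LICQ D xb yb) :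
    Tendsto (fun κ : KKTPoint D => κ.mu1) (near D xb yb)
      (𝓝 ((Q0 D xb : Set Q).indicator Mb.mu1)) := by
  refine tendsto_pi_nhds.mpr fun q => ?_
  by_cases hq : q ∈ Q0 D xb
  · rw [Set.indicator_of_mem (Finset.mem_coe.mpr hq)]
    exact tendsto_conCoeff (j := .inr (.inl q)) hT hL (by simpa [mpocSet, conSet] using hq)
  · refine tendsto_const_nhds.congr' ?_
    filter_upwards [tendsto_x.eventually (eventually_Q0_subset D xb)] with κ hQ
    have hqx : q ∉ Q0 D κ.x := fun h => hq (hQ h)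
    simp [mu1, hq, hqx]

theorem tendsto_mu2 (hT : TStatAt D xb yb Mb) (hL : MPOC_LICQ D xb yb) {i : Fin n}
    (hi : i ∈ Eact D yb) :
    Tendsto (fun κ : KKTPoint D => κ.mu2 i) (near D xb yb) (𝓝 (Mb.mu2 i)) := by
  simpa [conCoeff] using (tendsto_conCoeff (j := .inr (.inr (.inl i))) hT hL
    (by simpa [mpocSet, conSet] using hi)).neg

theorem tendsto_mu3 (hT : TStatAt D xb yb Mb) (hL : MPOC_LICQ D xb yb) :
    Tendsto (fun κ : KKTPoint D => κ.mult.mu3) (near D xb yb) (𝓝 Mb.mu3) :=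
  tendsto_conCoeff (j := .inr (.inr (.inr (.inl ())))) hT hL
    (by simpa [mpocSet, conSet, mem_cardAct] using hT.sum_eq)

theorem tendsto_multX (hT : TStatAt D xb yb Mb) (hL : MPOC_LICQ D xb yb) {i : Fin n}
    (hi : xb i = 0) :
    Tendsto (fun κ : KKTPoint D => κ.multX i) (near D xb yb) (𝓝 (Mb.multX xb yb i)) := by
  refine tendsto_conCoeff (j := .inr (.inr (.inr (.inr (.inl i))))) hT hL ?_
  have := (hT.1.2.2.2.2 i).1.lt_or_eq'
  simpa [mpocSet, conSet, mem_a01, mem_a00, hi] using this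

theorem tendsto_multY (hT : TStatAt D xb yb Mb) (hL : MPOC_LICQ D xb yb) {i : Fin n}
    (hi : yb i = 0) :
    Tendsto (fun κ : KKTPoint D => κ.multY i) (near D xb yb) (𝓝 (Mb.multY xb yb i)) := by
  refine tendsto_conCoeff (j := .inr (.inr (.inr (.inr (.inr i))))) hT hL ?_
  simpa [mpocSet, conSet, mem_a10, mem_a00, hi] using (eq_or_ne (xb i) 0).symm

/-- The active constraints of `S(t)` at `κ` match those of `R` at `(xb, yb)`. -/
structure StableActive (κ : KKTPoint D) (xb yb : Vec n) : Prop where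
  Q0_eq : Q0 D κ.x = Q0 D xb
  Eact_eq : Eact D κ.y = Eact D yb
  sum_eq : ∑ i, κ.y i = (n : ℝ) - D.s
  mem_Hact_or_mem_Nact : ∀ i, i ∈ Hact κ.t κ.x κ.y ∨ i ∈ Nact κ.y
  y_pos : ∀ i ∈ a00 xb yb, 0 < κ.y i

theorem y_ne_zero_of_eta_ne_zero (κ : KKTPoint D) {i : Fin n} (h : κ.eta i ≠ 0) : κ.y i ≠ 0 := by
  intro hy
  have hH := mem_Hact.mp (κ.mem_Hact_of_eta_ne_zero h)
  simp [hy, κ.t_pos.ne, κ.t_pos.ne'] at hH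

theorem eventually_Q0_eq (hnd : NondegTStatAt D xb yb Mb) :
    ∀ᶠ κ : KKTPoint D in near D xb yb, Q0 D κ.x = Q0 D xb := by
  have hmu1 : ∀ᶠ κ : KKTPoint D in near D xb yb, ∀ q ∈ Q0 D xb, κ.mu1 q ≠ 0 :=
    (eventually_all_finset _).mpr fun q hq => by
      have hq' : (Q0 D xb : Set Q).indicator Mb.mu1 q ≠ 0 := by
        simpa [hq] using (hnd.2.2.1 q hq).ne'
      exact (tendsto_pi_nhds.mp (tendsto_mu1 hnd.1 hnd.2.1) q).eventually_ne hq'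
  filter_upwards [hmu1, tendsto_x.eventually (eventually_Q0_subset D xb)] with κ hmu1 hQ
  exact hQ.antisymm fun q hq => Set.mem_of_indicator_ne_zero (hmu1 q hq)

theorem eventually_Eact_eq (hnd : NondegTStatAt D xb yb Mb) :
    ∀ᶠ κ : KKTPoint D in near D xb yb, Eact D κ.y = Eact D yb := by
  have hmu2 : ∀ᶠ κ : KKTPoint D in near D xb yb, ∀ i ∈ Eact D yb, κ.mu2 i ≠ 0 :=
    (eventually_all_finset _).mpr fun i hi =>
      (tendsto_mu2 hnd.1 hnd.2.1 hi).eventually_ne (hnd.2.2.2.1 i hi).ne'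
  filter_upwards [hmu2, tendsto_y.eventually (eventually_Eact_subset D yb)] with κ hmu2 hE
  exact hE.antisymm fun i hi => Set.mem_of_indicator_ne_zero (hmu2 i hi)

theorem eventually_sum_eq (hnd : NondegTStatAt D xb yb Mb) :
    ∀ᶠ κ : KKTPoint D in near D xb yb, ∑ i, κ.y i = (n : ℝ) - D.s := by
  filter_upwards [(tendsto_mu3 hnd.1 hnd.2.1).eventually_ne
    (hnd.2.2.2.2.1 hnd.1.sum_eq).ne'] with κ hmu3
  exact sub_eq_zero.mp ((mul_eq_zero.mp κ.kkt.2.2.2.2.1).resolve_left hmu3)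

theorem eventually_eta_ne_zero (hnd : NondegTStatAt D xb yb Mb)
    (hndt6 : ∀ i ∈ a01 xb yb, Mb.sig1 i ≠ 0) {i : Fin n} (hi : xb i = 0) :
    ∀ᶠ κ : KKTPoint D in near D xb yb, κ.eta i ≠ 0 :=
  ((tendsto_multX hnd.1 hnd.2.1 hi).eventually_ne (hnd.multX_ne_zero hndt6 hi)).mono
    fun _ hκ => left_ne_zero_of_mul hκ

theorem eventually_stableActive (hnd : NondegTStatAt D xb yb Mb)
    (hndt6 : ∀ i ∈ a01 xb yb, Mb.sig1 i ≠ 0) :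
    ∀ᶠ κ : KKTPoint D in near D xb yb, κ.StableActive xb yb := by
  have hactive : ∀ᶠ κ : KKTPoint D in near D xb yb, ∀ i, i ∈ Hact κ.t κ.x κ.y ∨ i ∈ Nact κ.y := by
    refine eventually_all.mpr fun i => ?_
    rcases mul_eq_zero.mp (hnd.1.1.2.2.2.1 i) with hx | hy
    · filter_upwards [eventually_eta_ne_zero hnd hndt6 hx] with κ hκ
      exact .inl (κ.mem_Hact_of_eta_ne_zero hκ)
    · filter_upwards [(tendsto_multY hnd.1 hnd.2.1 hy).eventually_ne
        (hnd.1.multY_ne_zero hnd.2.1 hy)] with κ hκ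
      by_cases heta : κ.eta i = 0
      · exact .inr (Set.mem_of_indicator_ne_zero fun h : κ.nu i = 0 =>
          hκ (by simp [multY, heta, h]))
      · exact .inl (κ.mem_Hact_of_eta_ne_zero heta)
  have hpos : ∀ᶠ κ : KKTPoint D in near D xb yb, ∀ i ∈ a00 xb yb, 0 < κ.y i :=
    (eventually_all_finset _).mpr fun i hi =>
      (eventually_eta_ne_zero hnd hndt6 (mem_a00.mp hi).1).mono fun κ hκ =>
        (κ.kkt.1.2.2.2.2 i).1.lt_of_ne' (κ.y_ne_zero_of_eta_ne_zero hκ)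
  filter_upwards [eventually_Q0_eq hnd, eventually_Eact_eq hnd, eventually_sum_eq hnd, hactive,
    hpos] with κ hQ hE hsum hactive hpos using ⟨hQ, hE, hsum, hactive, hpos⟩

theorem disjoint_Hact_Nact (κ : KKTPoint D) : Disjoint (Hact κ.t κ.x κ.y) (Nact κ.y) := by
  refine Finset.disjoint_left.mpr fun i hH hN => ?_
  simp [mem_Hact, mem_Nact.mp hN, κ.t_pos.ne, κ.t_pos.ne'] at hH

namespace StableActive

theorem card_activeSet_add_card {κ : KKTPoint D} (h : κ.StableActive xb yb)
    (hfeas : feasR D xb yb) (hsum : ∑ i, yb i = (n : ℝ) - D.s) :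
    #(activeSet D κ.t κ.x κ.y) + #(a00 xb yb) = #(mpocSet D xb yb) := by
  have hactive : #(Hact κ.t κ.x κ.y) + #(Nact κ.y) = n := by
    rw [← Finset.card_union_of_disjoint κ.disjoint_Hact_Nact, Finset.eq_univ_of_forall fun i =>
      Finset.mem_union.mpr (h.mem_Hact_or_mem_Nact i), Finset.card_univ, Fintype.card_fin]
  have hunion : (a01 xb yb ∪ a00 xb yb) ∪ (a10 xb yb ∪ a00 xb yb) = univ := by
    refine Finset.eq_univ_of_forall fun i => ?_
    have := hfeas.mem_a01_or_mem_a10_or_mem_a00 i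
    grind
  have hinter : (a01 xb yb ∪ a00 xb yb) ∩ (a10 xb yb ∪ a00 xb yb) = a00 xb yb := by
    ext i
    grind [mem_a01, mem_a10]
  have hcoord := Finset.card_union_add_card_inter (a01 xb yb ∪ a00 xb yb) (a10 xb yb ∪ a00 xb yb)
  have hcard : cardAct D κ.y = cardAct D yb := by
    ext
    simp [mem_cardAct, h.sum_eq, hsum]
  rw [hunion, hinter, Finset.card_univ, Fintype.card_fin] at hcoord
  simp only [activeSet, mpocSet, card_conSet, h.Q0_eq, h.Eact_eq, hcard]
  omega

theorem finrank_tangentR_add_card_le {κ : KKTPoint D} (h : κ.StableActive xb yb)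
    (hT : TStatAt D xb yb Mb) (hL : MPOC_LICQ D xb yb) :
    finrank ℝ (tangentR D xb yb) + #(a00 xb yb) ≤ finrank ℝ (tangentS D κ.t κ.x κ.y) := by
  have hR := hL.finrank_tangentR_add_card
  have hS := finrank_le_finrank_tangentS_add_card D κ.t κ.x κ.y
  have hcard := h.card_activeSet_add_card hT.1 hT.sum_eq
  omega

theorem coupling {κ : KKTPoint D} (h : κ.StableActive xb yb) {ξ : Vec n × Vec n}
    (hξ : ξ ∈ tangentS D κ.t κ.x κ.y) (i : Fin n) : κ.y i * ξ.1 i + κ.x i * ξ.2 i = 0 := by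
  obtain ⟨-, -, -, -, hH, hN⟩ := mem_tangentS.mp hξ
  rcases h.mem_Hact_or_mem_Nact i with hi | hi
  · exact hH i hi
  · rw [mem_Nact.mp hi, hN i hi, zero_mul, mul_zero, add_zero]

end StableActive

/-- The contribution `(η≥_i - η≤_i) ξ_{1,i} ξ_{2,i}` of the product `x_i y_i` to the Hessian of the
Lagrange function, up to the factor `-2`. -/
def crossTerm (κ : KKTPoint D) (ξ : Vec n × Vec n) (i : Fin n) : ℝ := κ.eta i * (ξ.1 i * ξ.2 i)

namespace StableActive

theorem x_mul_crossTerm {κ : KKTPoint D} (h : κ.StableActive xb yb) {ξ : Vec n × Vec n}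
    (hξ : ξ ∈ tangentS D κ.t κ.x κ.y) (i : Fin n) :
    κ.x i * κ.crossTerm ξ i = -(κ.multX i * ξ.1 i ^ 2) := by
  simp only [crossTerm, multX, Pi.mul_apply]
  linear_combination κ.eta i * ξ.1 i * h.coupling hξ i

theorem y_mul_crossTerm {κ : KKTPoint D} (h : κ.StableActive xb yb) {ξ : Vec n × Vec n}
    (hξ : ξ ∈ tangentS D κ.t κ.x κ.y) (i : Fin n) :
    κ.y i * κ.crossTerm ξ i = -(κ.multY i * ξ.2 i ^ 2) := by
  have hnu : κ.nu i * ξ.2 i = 0 := by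
    by_cases hi : i ∈ Nact κ.y
    · rw [(mem_tangentS.mp hξ).2.2.2.2.2 i hi, mul_zero]
    · simp [nu, hi]
  simp only [crossTerm, multY, Pi.add_apply, Pi.mul_apply]
  linear_combination κ.eta i * ξ.2 i * h.coupling hξ i + ξ.2 i * hnu

end StableActive

theorem eventually_crossTerm_nonneg (hnd : NondegTStatAt D xb yb Mb)
    (hndt6 : ∀ i ∈ a01 xb yb, Mb.sig1 i ≠ 0) :
    ∀ᶠ κ : KKTPoint D in near D xb yb, ∀ ξ ∈ tangentS D κ.t κ.x κ.y, ∀ i ∈ a00 xb yb,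
      0 ≤ κ.crossTerm ξ i := by
  have hmultY : ∀ᶠ κ : KKTPoint D in near D xb yb, ∀ i ∈ a00 xb yb, κ.multY i < 0 := by
    refine (eventually_all_finset _).mpr fun i hi => ?_
    obtain ⟨hx, hy⟩ := mem_a00.mp hi
    refine (tendsto_multY hnd.1 hnd.2.1 hy).eventually_lt_const ?_
    simpa [TMult.multY, mem_a10, hi, hx] using (hnd.2.2.2.2.2.1 i hi).2
  filter_upwards [hmultY, eventually_stableActive hnd hndt6] with κ hmultY hκ ξ hξ i hi
  refine nonneg_of_mul_nonneg_right (a := κ.y i) ?_ (hκ.y_pos i hi)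
  rw [hκ.y_mul_crossTerm hξ, ← neg_mul]
  exact mul_nonneg (neg_pos.mpr (hmultY i hi)).le (sq_nonneg _)

section
variable {l : Filter (KKTPoint D)} {u : KKTPoint D → Vec n × Vec n} {w : Vec n × Vec n}

theorem tendsto_crossTerm (hl : l ≤ near D xb yb) (hnd : NondegTStatAt D xb yb Mb)
    (hndt6 : ∀ i ∈ a01 xb yb, Mb.sig1 i ≠ 0)
    (hu : ∀ᶠ κ in l, u κ ∈ tangentS D κ.t κ.x κ.y) (huw : Tendsto u l (𝓝 w))
    {i : Fin n} (hi : i ∉ a00 xb yb) : Tendsto (fun κ => κ.crossTerm (u κ) i) l (𝓝 0) := by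
  have hx := (tendsto_x_apply i).mono_left hl
  have hy := (tendsto_y_apply i).mono_left hl
  have hstable := (eventually_stableActive hnd hndt6).filter_mono hl
  rcases mul_eq_zero.mp (hnd.1.1.2.2.2.1 i) with hxb | hyb
  · have hyb : yb i ≠ 0 := fun hyb => hi (mem_a00.mpr ⟨hxb, hyb⟩)
    have hmultX := (tendsto_multX hnd.1 hnd.2.1 hxb).mono_left hl
    have h := ((hx.mul hmultX).mul ((tendsto_pi_nhds.mp huw.snd_nhds i).pow 2)).neg.div
      (hy.pow 2) (pow_ne_zero 2 hyb)
    rw [hxb, zero_mul, zero_mul, neg_zero, zero_div] at h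
    refine h.congr' ?_
    filter_upwards [hu, hstable, hy.eventually_ne hyb] with κ hu hκ hyκ
    refine (div_eq_iff (pow_ne_zero 2 hyκ)).mpr ?_
    linear_combination -κ.y i * hκ.y_mul_crossTerm hu i + (u κ).2 i ^ 2 * κ.y_mul_multY i
  · have hxb : xb i ≠ 0 := fun hxb => hi (mem_a00.mpr ⟨hxb, hyb⟩)
    have hmultY := (tendsto_multY hnd.1 hnd.2.1 hyb).mono_left hl
    have h := ((hy.mul hmultY).mul ((tendsto_pi_nhds.mp huw.fst_nhds i).pow 2)).neg.div
      (hx.pow 2) (pow_ne_zero 2 hxb)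
    rw [hyb, zero_mul, zero_mul, neg_zero, zero_div] at h
    refine h.congr' ?_
    filter_upwards [hu, hstable, hx.eventually_ne hxb] with κ hu hκ hxκ
    refine (div_eq_iff (pow_ne_zero 2 hxκ)).mpr ?_
    linear_combination -κ.x i * hκ.x_mul_crossTerm hu i - (u κ).1 i ^ 2 * κ.y_mul_multY i

theorem apply_eq_zero_of_isBoundedUnder_crossTerm (hl : l ≤ near D xb yb) [l.NeBot]
    (hnd : NondegTStatAt D xb yb Mb) (hndt6 : ∀ i ∈ a01 xb yb, Mb.sig1 i ≠ 0)
    (hu : ∀ᶠ κ in l, u κ ∈ tangentS D κ.t κ.x κ.y) (huw : Tendsto u l (𝓝 w))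
    {i : Fin n} (hi : i ∈ a00 xb yb)
    (hbdd : l.IsBoundedUnder (· ≤ ·) fun κ => κ.crossTerm (u κ) i) :
    w.1 i = 0 ∧ w.2 i = 0 := by
  obtain ⟨hxb, hyb⟩ := mem_a00.mp hi
  have hstable := (eventually_stableActive hnd hndt6).filter_mono hl
  obtain ⟨C, hC⟩ := hbdd.eventually_le
  have hbdd : l.IsBoundedUnder (· ≤ ·) fun κ => ‖κ.crossTerm (u κ) i‖ := by
    refine isBoundedUnder_of_eventually_le (a := C) ?_
    filter_upwards [hu, hC, (eventually_crossTerm_nonneg hnd hndt6).filter_mono hl]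
      with κ hu hC hnonneg
    rwa [Real.norm_of_nonneg (hnonneg _ hu i hi)]
  have hx := (hxb ▸ (tendsto_x_apply i).mono_left hl).zero_mul_isBoundedUnder_le hbdd
  have hy := (hyb ▸ (tendsto_y_apply i).mono_left hl).zero_mul_isBoundedUnder_le hbdd
  have hmultX := (((tendsto_multX hnd.1 hnd.2.1 hxb).mono_left hl).mul
    ((tendsto_pi_nhds.mp huw.fst_nhds i).pow 2)).neg
  have hmultY := (((tendsto_multY hnd.1 hnd.2.1 hyb).mono_left hl).mul
    ((tendsto_pi_nhds.mp huw.snd_nhds i).pow 2)).neg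
  constructor
  · have := tendsto_nhds_unique_of_eventuallyEq hmultX hx <| by
      filter_upwards [hu, hstable] with κ hu hκ using (hκ.x_mul_crossTerm hu i).symm
    simpa [hnd.multX_ne_zero hndt6 hxb] using this
  · have := tendsto_nhds_unique_of_eventuallyEq hmultY hy <| by
      filter_upwards [hu, hstable] with κ hu hκ using (hκ.y_mul_crossTerm hu i).symm
    simpa [hnd.1.multY_ne_zero hnd.2.1 hyb] using this

theorem mem_tangentR_of_tendsto [l.NeBot] (hl : l ≤ near D xb yb)
    (hnd : NondegTStatAt D xb yb Mb) (hndt6 : ∀ i ∈ a01 xb yb, Mb.sig1 i ≠ 0)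
    (hu : ∀ᶠ κ in l, u κ ∈ tangentS D κ.t κ.x κ.y) (huw : Tendsto u l (𝓝 w))
    (hbdd : ∀ i ∈ a00 xb yb, l.IsBoundedUnder (· ≤ ·) fun κ => κ.crossTerm (u κ) i) :
    w ∈ tangentR D xb yb := by
  have hstable := (eventually_stableActive hnd hndt6).filter_mono hl
  have hu1 (i : Fin n) : Tendsto (fun κ => (u κ).1 i) l (𝓝 (w.1 i)) :=
    tendsto_pi_nhds.mp huw.fst_nhds i
  have hu2 (i : Fin n) : Tendsto (fun κ => (u κ).2 i) l (𝓝 (w.2 i)) :=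
    tendsto_pi_nhds.mp huw.snd_nhds i
  have hgrad {F : Vec n → ℝ} (hF : ContDiff ℝ 2 F) :
      Tendsto (fun κ : KKTPoint D => dot (grad F κ.x) (u κ).1) l (𝓝 (dot (grad F xb) w.1)) :=
    tendsto_finsetSum _ fun i _ => (tendsto_pi_nhds.mp (((continuous_grad hF).tendsto xb).comp
      (tendsto_x.mono_left hl)) i).mul (hu1 i)
  have hcoupling (i : Fin n) : yb i * w.1 i + xb i * w.2 i = 0 :=
    tendsto_nhds_unique_of_eventuallyEq ((((tendsto_y_apply i).mono_left hl).mul (hu1 i)).add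
      (((tendsto_x_apply i).mono_left hl).mul (hu2 i))) tendsto_const_nhds <| by
        filter_upwards [hu, hstable] with κ hu hκ using hκ.coupling hu i
  have ha00 (i) (hi : i ∈ a00 xb yb) :=
    apply_eq_zero_of_isBoundedUnder_crossTerm hl hnd hndt6 hu huw hi (hbdd i hi)
  refine mem_tangentR.mpr ⟨fun p => ?_, fun q hq => ?_, fun i hi => ?_, fun _ => ?_,
    fun i hi => ?_, fun i hi => ?_⟩
  · refine tendsto_nhds_unique_of_eventuallyEq (hgrad (D.hh p)) tendsto_const_nhds ?_
    filter_upwards [hu] with κ hu using (mem_tangentS.mp hu).1 p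
  · refine tendsto_nhds_unique_of_eventuallyEq (hgrad (D.hg q)) tendsto_const_nhds ?_
    filter_upwards [hu, hstable] with κ hu hκ using (mem_tangentS.mp hu).2.1 q (hκ.Q0_eq ▸ hq)
  · refine tendsto_nhds_unique_of_eventuallyEq (hu2 i) tendsto_const_nhds ?_
    filter_upwards [hu, hstable] with κ hu hκ using (mem_tangentS.mp hu).2.2.1 i (hκ.Eact_eq ▸ hi)
  · refine tendsto_nhds_unique_of_eventuallyEq (tendsto_finsetSum _ fun i _ => hu2 i)
      tendsto_const_nhds ?_
    filter_upwards [hu, hstable] with κ hu hκ using (mem_tangentS.mp hu).2.2.2.1 hκ.sum_eq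
  · rcases Finset.mem_union.mp hi with hi | hi
    · exact (ha00 i hi).1
    · simpa [(mem_a01.mp hi).1, (mem_a01.mp hi).2.ne'] using hcoupling i
  · rcases Finset.mem_union.mp hi with hi | hi
    · exact (ha00 i hi).2
    · simpa [(mem_a10.mp hi).1, (mem_a10.mp hi).2] using hcoupling i

theorem tendsto_hess_LagS_add_sum_crossTerm (hl : l ≤ near D xb yb)
    (hnd : NondegTStatAt D xb yb Mb) (hndt6 : ∀ i ∈ a01 xb yb, Mb.sig1 i ≠ 0)
    (hu : ∀ᶠ κ in l, u κ ∈ tangentS D κ.t κ.x κ.y) (huw : Tendsto u l (𝓝 w)) :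
    Tendsto (fun κ => hess (LagS D κ.t κ.x κ.y κ.mult) (κ.x, κ.y) (u κ) (u κ) +
        2 * ∑ i ∈ a00 xb yb, κ.crossTerm (u κ) i) l
      (𝓝 (hess (LagR D xb yb Mb) (xb, yb) w w)) := by
  have hcross : Tendsto (fun κ => ∑ i ∈ (a00 xb yb)ᶜ, κ.crossTerm (u κ) i) l (𝓝 0) := by
    simpa using tendsto_finsetSum (a00 xb yb)ᶜ fun i hi =>
      tendsto_crossTerm hl hnd hndt6 hu huw (Finset.mem_compl.mp hi)
  have hderiv := tendsto_fderiv_fderiv_lagrangianX D ((tendsto_lam hnd.1 hnd.2.1).mono_left hl)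
    ((tendsto_mu1 hnd.1 hnd.2.1).mono_left hl) (tendsto_x.mono_left hl)
    huw.fst_nhds
  have hform := hderiv.sub (hcross.const_mul 2)
  rw [← hess_LagR_self, mul_zero, sub_zero] at hform
  refine hform.congr fun κ => ?_
  rw [hess_LagS_self, ← Finset.sum_add_sum_compl (a00 xb yb)]
  simp only [crossTerm]
  ring

theorem mem_tangentR_and_hess_nonneg [l.NeBot] (hl : l ≤ near D xb yb)
    (hnd : NondegTStatAt D xb yb Mb) (hndt6 : ∀ i ∈ a01 xb yb, Mb.sig1 i ≠ 0)
    (hu : ∀ᶠ κ in l, u κ ∈ tangentS D κ.t κ.x κ.y) (huw : Tendsto u l (𝓝 w))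
    (hhess : ∀ᶠ κ in l, 0 ≤ hess (LagS D κ.t κ.x κ.y κ.mult) (κ.x, κ.y) (u κ) (u κ)) :
    w ∈ tangentR D xb yb ∧ 0 ≤ hess (LagR D xb yb Mb) (xb, yb) w w := by
  have hlim := tendsto_hess_LagS_add_sum_crossTerm hl hnd hndt6 hu huw
  have hnonneg : ∀ᶠ κ in l, ∀ i ∈ a00 xb yb, 0 ≤ κ.crossTerm (u κ) i := by
    filter_upwards [hu, (eventually_crossTerm_nonneg hnd hndt6).filter_mono hl] with κ hu h
      using h _ hu
  constructor
  · obtain ⟨C, hC⟩ := hlim.isBoundedUnder_le.eventually_le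
    refine mem_tangentR_of_tendsto hl hnd hndt6 hu huw fun i hi =>
      isBoundedUnder_of_eventually_le (a := C / 2) ?_
    filter_upwards [hnonneg, hhess, hC] with κ hnonneg hhess hC
    linarith [Finset.single_le_sum hnonneg hi]
  · refine ge_of_tendsto hlim ?_
    filter_upwards [hnonneg, hhess] with κ hnonneg hhess
    linarith [Finset.sum_nonneg hnonneg]

theorem mem_tangentR_and_hess_nonpos [l.NeBot] (hl : l ≤ near D xb yb)
    (hnd : NondegTStatAt D xb yb Mb) (hndt6 : ∀ i ∈ a01 xb yb, Mb.sig1 i ≠ 0)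
    (hu : ∀ᶠ κ in l, u κ ∈ tangentS D κ.t κ.x κ.y) (huw : Tendsto u l (𝓝 w))
    (hhess : ∀ᶠ κ in l, hess (LagS D κ.t κ.x κ.y κ.mult) (κ.x, κ.y) (u κ) (u κ) ≤ 0)
    (hzero : ∀ᶠ κ in l, ∀ i ∈ a00 xb yb, (u κ).1 i = 0) :
    w ∈ tangentR D xb yb ∧ hess (LagR D xb yb Mb) (xb, yb) w w ≤ 0 := by
  have hcross : ∀ᶠ κ in l, ∀ i ∈ a00 xb yb, κ.crossTerm (u κ) i = 0 :=
    hzero.mono fun κ h i hi => by simp [crossTerm, h i hi]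
  constructor
  · exact mem_tangentR_of_tendsto hl hnd hndt6 hu huw fun i hi =>
      isBoundedUnder_of_eventually_le (hcross.mono fun κ h => (h i hi).le)
  · refine le_of_tendsto (tendsto_hess_LagS_add_sum_crossTerm hl hnd hndt6 hu huw) ?_
    filter_upwards [hcross, hhess] with κ hcross hhess
    rwa [Finset.sum_eq_zero hcross, mul_zero, add_zero]

end

theorem eventually_TIndex_le_QIdx (hnd : NondegTStatAt D xb yb Mb)
    (hndt6 : ∀ i ∈ a01 xb yb, Mb.sig1 i ≠ 0) :
    ∀ᶠ κ : KKTPoint D in near D xb yb, TIndex D xb yb Mb ≤ QIdx D κ.t κ.x κ.y κ.mult := by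
  refine Filter.mem_iff_ultrafilter.mpr fun l hl => by_contra fun hlt => ?_
  obtain ⟨R, hRT, S, -, hR, hRS, hneg, -⟩ := hnd.exists_finrank_eq_TIndex
  choose _ _ W hWT _ hW _ hnonneg using fun κ : KKTPoint D =>
    exists_finrank_eq_QIdx D κ.t κ.x κ.y κ.mult
  have hdim : ∀ᶠ κ in (l : Filter (KKTPoint D)), finrank ℝ S + 1 ≤ finrank ℝ (W κ) := by
    filter_upwards [Ultrafilter.eventually_not.mpr hlt,
      (eventually_stableActive hnd hndt6).filter_mono hl] with κ hlt hκ
    have := hW κ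
    have := hκ.finrank_tangentR_add_card_le hnd.1 hnd.2.1
    omega
  obtain ⟨U, hU, hlim⟩ := exists_limit_submodule l hdim
  have hUT : ∀ w ∈ U, w ∈ tangentR D xb yb ∧ 0 ≤ hess (LagR D xb yb Mb) (xb, yb) w w := by
    intro w hw
    obtain ⟨u, hu, huw⟩ := hlim w hw
    exact mem_tangentR_and_hess_nonneg hl hnd hndt6 (hu.mono fun κ h => hWT κ h) huw
      (hu.mono fun κ h => hnonneg κ _ h)
  have := finrank_add_finrank_le_of_disjoint_of_le hRT (fun w hw => (hUT w hw).1) <|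
    Submodule.disjoint_def.mpr fun w hwR hwU => by_contra fun h0 =>
      (hneg w hwR h0).not_ge (hUT w hwU).2
  omega

theorem eventually_QIdx_le_TIndex (hnd : NondegTStatAt D xb yb Mb)
    (hndt6 : ∀ i ∈ a01 xb yb, Mb.sig1 i ≠ 0) :
    ∀ᶠ κ : KKTPoint D in near D xb yb, QIdx D κ.t κ.x κ.y κ.mult ≤ TIndex D xb yb Mb := by
  refine Filter.mem_iff_ultrafilter.mpr fun l hl => by_contra fun hlt => ?_
  obtain ⟨R, -, S, hST, hR, hRS, -, hpos⟩ := hnd.exists_finrank_eq_TIndex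
  choose W hWT _ _ hW _ hneg _ using fun κ : KKTPoint D =>
    exists_finrank_eq_QIdx D κ.t κ.x κ.y κ.mult
  let V : Submodule ℝ (Vec n × Vec n) := ⨅ i ∈ a00 xb yb, (pairing (ex i)).ker
  have hV (ξ) : ξ ∈ V ↔ ∀ i ∈ a00 xb yb, ξ.1 i = 0 := by simp [V, pairing_ex]
  have hdim : ∀ᶠ κ in (l : Filter (KKTPoint D)),
      finrank ℝ R + 1 ≤ finrank ℝ (W κ ⊓ V : Submodule ℝ (Vec n × Vec n)) := by
    filter_upwards [Ultrafilter.eventually_not.mpr hlt] with κ hlt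
    have := hW κ
    have : _ ≤ finrank ℝ ↥(W κ ⊓ V) + _ :=
      finrank_le_finrank_inf_iInf_ker_add_card (W κ) (fun i => pairing (ex i)) (a00 xb yb)
    omega
  obtain ⟨U, hU, hlim⟩ := exists_limit_submodule l hdim
  have hUT : ∀ w ∈ U, w ∈ tangentR D xb yb ∧ hess (LagR D xb yb Mb) (xb, yb) w w ≤ 0 := by
    intro w hw
    obtain ⟨u, hu, huw⟩ := hlim w hw
    exact mem_tangentR_and_hess_nonpos hl hnd hndt6 (hu.mono fun κ h => hWT κ h.1) huw
      (hu.mono fun κ h => hneg κ _ h.1) (hu.mono fun κ h => (hV _).mp h.2)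
  have := finrank_add_finrank_le_of_disjoint_of_le hST (fun w hw => (hUT w hw).1) <|
    Submodule.disjoint_def.mpr fun w hwS hwU => by_contra fun h0 =>
      (hpos w hwS h0).not_ge (hUT w hwU).2
  omega

end

end KKTPoint

theorem statement15_general (D : Setting n P Q) {xb yb : Vec n} {Mb : TMult n P Q}
    (hnd : NondegTStatAt D xb yb Mb) (hndt6 : ∀ i ∈ a01 xb yb, Mb.sig1 i ≠ 0) :
    ∀ᶠ z in 𝓝 (xb, yb), ∀ t > 0, ∀ M, KKTAt D t z.1 z.2 M →
      QIdx D t z.1 z.2 M = TIndex D xb yb Mb := by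
  have h := (KKTPoint.eventually_QIdx_le_TIndex hnd hndt6).and
    (KKTPoint.eventually_TIndex_le_QIdx hnd hndt6)
  filter_upwards [eventually_comap.mp h] with z hz t ht M hM
  obtain ⟨hle, hge⟩ := hz ⟨t, z.1, z.2, M, ht, hM⟩ rfl
  exact hle.antisymm hge

/-- Theorem 3, last part: under NDT6 the T-index of the limiting
nondegenerate T-stationary point equals the common quadratic index m of the
converging nondegenerate KKT points of S(t_k). -/
theorem statement15 {n : ℕ} {P Q : Type*} [Fintype P] [Fintype Q]
    (D : Setting n P Q) (t : ℕ → ℝ) (htpos : ∀ k, 0 < t k)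
    (ht0 : Filter.Tendsto t Filter.atTop (nhds 0))
    (X Y : ℕ → Vec n) (Mk : ℕ → SMult n P Q)
    (hK : ∀ k, NondegKKTAt D (t k) (X k) (Y k) (Mk k))
    (m : ℕ) (hQI : ∀ k, QIdx D (t k) (X k) (Y k) (Mk k) = m)
    (xb yb : Vec n)
    (hconv : Filter.Tendsto (fun k => ((X k, Y k) : Vec n × Vec n))
      Filter.atTop (nhds (xb, yb)))
    (Mb : TMult n P Q) (hnd : NondegTStatAt D xb yb Mb)
    (hndt6 : ∀ i ∈ a01 xb yb, Mb.sig1 i ≠ 0) :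
    TIndex D xb yb Mb = m := by
  obtain ⟨k, hk⟩ := (hconv.eventually (statement15_general D hnd hndt6)).exists
  exact (hk (t k) (htpos k) (Mk k) (hK k).1).symm.trans (hQI k)

end Scholtes
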